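/- Let T be an r-row rectangular fluctuating tableau of type (c_1,…,c_n) with t := Σ_j |c_j| ≥ 1, let σ be the long cycle of {1,…,t} (σ(j) = j+1 for j < t, σ(t) = 1), and let w_0 be the order-reversing permutation w_0(j) = t+1−j. Then for all 0 ≤ i ≤ r: (i) prom_i(T) is everywhere defined and is a permutation of {1,…,t}; (ii) prom_i(T) = prom_{r−i}(T)^{−1}; (iii) prom_i(P(T)) = σ^{−|c_1|} ∘ prom_i(T) ∘ σ^{|c_1|}; (iv) prom_i(E(T)) = w_0 ∘ prom_{r−i}(T) ∘ w_0. -/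

import Mathlib

open scoped Classical

noncomputable section

namespace FT

/-- A (raw) `r`-row integer vector; generalized partitions are the antitone ones. -/
abbrev GP (r : ℕ) := Fin r → ℤ

/-- The weakly decreasing rearrangement of a tuple. -/
def sortDesc {r : ℕ} (α : GP r) : GP r := fun i => (α ∘ Tuple.sort α) i.rev

/-- Standard basis vector (0-indexed). -/
def eV {r : ℕ} (a : Fin r) : GP r := fun i => if i = a then 1 else 0

/-- Standard basis vector with 1-indexed row `a` (zero if out of range). -/
def eN (r : ℕ) (a : ℕ) : GP r := fun i => if (i : ℕ) + 1 = a then 1 else 0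

/-- Indicator vector of a set of rows. -/
def indV {r : ℕ} (S : Finset (Fin r)) : GP r := fun i => if i ∈ S then 1 else 0

/-- `colStep r c μ λ`: `λ` is obtained from `μ` by adding (if `c ≥ 0`) or removing
(if `c ≤ 0`) a skew column of `|c|` boxes. -/
def colStep (r : ℕ) (c : ℤ) (μ lam : GP r) : Prop :=
  ∃ S : Finset (Fin r), S.card = c.natAbs ∧
    (if 0 ≤ c then lam = μ + indV S else lam = μ - indV S)

/-- Skew fluctuating tableau of length `n` and type `c` (recorded at indices `0,…,n`;
values of `T` and `c` beyond those indices are irrelevant). -/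
def IsSkewFT (r n : ℕ) (T : ℕ → GP r) (c : ℕ → ℤ) : Prop :=
  (∀ k ≤ n, Antitone (T k)) ∧ ∀ j < n, colStep r (c j) (T j) (T (j + 1))

/-- (Non-skew) fluctuating tableau: starts at the empty shape. -/
def IsFT (r n : ℕ) (T : ℕ → GP r) (c : ℕ → ℤ) : Prop :=
  IsSkewFT r n T c ∧ T 0 = 0

/-- Rectangular: the final shape is constant. -/
def Rect (r n : ℕ) (T : ℕ → GP r) : Prop := ∃ m : ℤ, ∀ i, T n i = m

/-- Bender–Knuth involution `BK_i` (for `1 ≤ i ≤ n-1`). -/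
def BK {r : ℕ} (i : ℕ) (T : ℕ → GP r) : ℕ → GP r :=
  fun k => if k = i then sortDesc (T (i + 1) + T (i - 1) - T i) else T k

/-- `BKseg a m = BK (a+m-1) ∘ ⋯ ∘ BK a` (apply `BK a` first). -/
def BKseg {r : ℕ} (a : ℕ) : ℕ → (ℕ → GP r) → ℕ → GP r
  | 0 => id
  | m + 1 => BK (a + m) ∘ BKseg a m

/-- Promotion `P = BK_{n-1} ∘ ⋯ ∘ BK_1` on length-`n` tableaux. -/
def promo {r : ℕ} (n : ℕ) (T : ℕ → GP r) : ℕ → GP r := BKseg 1 (n - 1) T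

/-- `BKsegRev a m = BK a ∘ ⋯ ∘ BK (a+m-1)` (apply `BK (a+m-1)` first). -/
def BKsegRev {r : ℕ} (a : ℕ) : ℕ → (ℕ → GP r) → ℕ → GP r
  | 0 => id
  | m + 1 => BKsegRev a m ∘ BK (a + m)

/-- Inverse of promotion: `P⁻¹ = BK_1 ∘ ⋯ ∘ BK_{n-1}`. -/
def promoInv {r : ℕ} (n : ℕ) (T : ℕ → GP r) : ℕ → GP r := BKsegRev 1 (n - 1) T

def evacAux {r : ℕ} : ℕ → (ℕ → GP r) → ℕ → GP r
  | 0, T => T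
  | m + 1, T => evacAux m (BKseg 1 (m + 1) T)

/-- Evacuation `E = BK_1 ∘ (BK_2∘BK_1) ∘ ⋯ ∘ (BK_{n-1}∘⋯∘BK_1)`. -/
def evac {r : ℕ} (n : ℕ) (T : ℕ → GP r) : ℕ → GP r := evacAux (n - 1) T

def devacAux {r : ℕ} (n : ℕ) : ℕ → (ℕ → GP r) → ℕ → GP r
  | 0, T => T
  | m + 1, T => BKseg (n - (m + 1)) (m + 1) (devacAux n m T)

/-- Dual evacuation `E* = (BK_{n-1}∘⋯∘BK_1) ∘ (BK_{n-1}∘⋯∘BK_2) ∘ ⋯ ∘ BK_{n-1}`. -/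
def devac {r : ℕ} (n : ℕ) (T : ℕ → GP r) : ℕ → GP r := devacAux n (n - 1) T

/-- `rev(-v)`. -/
def revNeg {r : ℕ} (v : GP r) : GP r := fun i => - v i.rev

/-- Time reversal `τ`. -/
def tauT {r : ℕ} (n : ℕ) (T : ℕ → GP r) : ℕ → GP r := fun k => T (n - k)

/-- `ϖ`. -/
def varpiT {r : ℕ} (T : ℕ → GP r) : ℕ → GP r := fun k => revNeg (T k)

/-- `ε`. -/
def epsT {r : ℕ} (n : ℕ) (T : ℕ → GP r) : ℕ → GP r := fun k => revNeg (T (n - k))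

/-- Sign of the `j`-th step of `T` (paper indexing: step `j` goes from `λ^{j-1}` to `λ^j`). -/
def sgnStep {r : ℕ} (T : ℕ → GP r) (j : ℕ) : ℤ :=
  if T j = T (j - 1) then 0 else if T (j - 1) ≤ T j then 1 else -1

/-- The switch involution `toggle_j` (paper indexing, `1 ≤ j ≤ n`). -/
def toggleT {r : ℕ} (j : ℕ) (T : ℕ → GP r) : ℕ → GP r :=
  fun m => if m < j then T m else fun i => T m i - sgnStep T j

/-- Number of boxes added/removed in the step from `T j` to `T (j+1)`. -/
def stepSize {r : ℕ} (T : ℕ → GP r) (j : ℕ) : ℕ :=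
  (Finset.univ.filter fun i : Fin r => T (j + 1) i ≠ T j i).card

/-- Cumulative step sizes: position of `T j` inside the oscillization. -/
def cum {r : ℕ} (T : ℕ → GP r) (j : ℕ) : ℕ := ∑ j' ∈ Finset.range j, stepSize T j'

/-- The `j`-th intermediate shape of the oscillization of the skew-column step `μ → λ`:
boxes are added smallest-row-first and removed largest-row-first. -/
def oscStep {r : ℕ} (μ lam : GP r) (j : ℕ) : GP r := fun i =>
  let S := Finset.univ.filter fun i' : Fin r => lam i' ≠ μ i'
  if i ∈ S ∧ (if μ i < lam i then (S.filter fun i' => i' ≤ i).card ≤ j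
              else (S.filter fun i' => i ≤ i').card ≤ j)
  then lam i else μ i

/-- Largest index `j ≤ n` with `cum T j ≤ k`. -/
def stdIdx {r : ℕ} (n : ℕ) (T : ℕ → GP r) (k : ℕ) : ℕ :=
  ((Finset.range (n + 1)).filter fun j => cum T j ≤ k).sup id

/-- The oscillization `std(T)` of a length-`n` tableau, a tableau of length `t = Σ|c_j|`. -/
def stdT {r : ℕ} (n : ℕ) (T : ℕ → GP r) : ℕ → GP r := fun k =>
  if stdIdx n T k = n then T n
  else oscStep (T (stdIdx n T k)) (T (stdIdx n T k + 1)) (k - cum T (stdIdx n T k))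

/-- Rows of the promotion–evacuation growth diagram: `PE t S u` is `P^u(S)`
for a length-`t` (oscillating) tableau `S`. -/
def PE {r : ℕ} (t : ℕ) (S : ℕ → GP r) (u : ℕ) : ℕ → GP r := (promo t)^[u] S

/-- `i ∈ {1,…,r-1}` is recorded at cell `(u,v)` of the growth diagram of `S`
(rows 1-indexed; `λ^{u,v} = P^u(S)(v-u)`). -/
def recorded (r t : ℕ) (S : ℕ → GP r) (i u v : ℕ) : Prop :=
  ∃ a b : Fin r,
    (PE t S (u - 1) (v - u) = PE t S u (v - u - 1) + eV a ∧
     PE t S (u - 1) (v - u + 1) = PE t S u (v - u) + eV b ∧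
     (a : ℕ) < i ∧ i ≤ (b : ℕ))
    ∨
    (PE t S u (v - u - 1) = PE t S (u - 1) (v - u) + eV a ∧
     PE t S u (v - u) = PE t S (u - 1) (v - u + 1) + eV b ∧
     (b : ℕ) < i ∧ i ≤ (a : ℕ))

/-- `i ∈ PM(T)_{u,v}` for an off-diagonal entry of the promotion matrix of `T`
(`u, v ∈ {1,…,t}`, `1 ≤ i ≤ r-1`), using the oscillization `std(T)`. -/
def PMmem (r n t : ℕ) (T : ℕ → GP r) (i u v : ℕ) : Prop :=
  1 ≤ u ∧ u ≤ t ∧ 1 ≤ v ∧ v ≤ t ∧ u ≠ v ∧ 1 ≤ i ∧ i ≤ r - 1 ∧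
    recorded r t (stdT n T) i u (if u < v then v else v + t)

/-- Graph of the partial promotion function `prom_i(T)`: `prom_i(T)(u) = v`.
By convention `prom_0 = prom_r = id` on `{1,…,t}`. -/
def promRel (r n t : ℕ) (T : ℕ → GP r) (i u v : ℕ) : Prop :=
  if i = 0 ∨ i = r then 1 ≤ u ∧ u ≤ t ∧ u = v else PMmem r n t T i u v

/-- Sum of the first `i` entries (1-indexed prefix sums). -/
def pSum {r : ℕ} (v : GP r) (i : ℕ) : ℤ :=
  ∑ j ∈ Finset.univ.filter (fun j : Fin r => (j : ℕ) < i), v j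

/-- The filled oscillized local-rule grid: row index `k` counts down from the top row
(`k = 0` is `std(λ → ν)`), column index `q` goes right; the left column is
`std(κ → λ)` read so that `grid cA κ λ ν k 0 = std(κ→λ)` at position `cA - k`. -/
def grid {r : ℕ} (cA : ℕ) (κ lam ν : GP r) : ℕ → ℕ → GP r
  | 0, q => oscStep lam ν q
  | k + 1, 0 => oscStep κ lam (cA - (k + 1))
  | k + 1, q + 1 =>
      sortDesc (grid cA κ lam ν k (q + 1) + grid cA κ lam ν (k + 1) q -
        grid cA κ lam ν k q)
  termination_by k q => (k, q)

/-- 1-indexed entry of a vector (0 if out of range). -/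
def ent {r : ℕ} (v : GP r) (h : ℕ) : ℤ := if hh : h - 1 < r then v ⟨h - 1, hh⟩ else 0

/-- The chain `j_0 = 1, j_h = ` least `h`-balance point of the lattice word of `T`
weakly after `j_{h-1}` (in `{1,…,n}`), `none` once undefined. An index `j` is an
`h`-balance point iff `(T j)_h = (T j)_{h+1}` (1-indexed rows). -/
def jChain (r n : ℕ) (T : ℕ → GP r) : ℕ → Option ℕ
  | 0 => some 1
  | h + 1 =>
    match jChain r n T h with
    | none => none
    | some jp =>
      if H : ∃ j, jp ≤ j ∧ j ≤ n ∧ ent (T j) (h + 1) = ent (T j) (h + 2) then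
        some (Nat.find H)
      else none

/-- `k`: the largest `h ≤ r-1` such that `j_1, …, j_h` are all defined. -/
def kVal (r n : ℕ) (T : ℕ → GP r) : ℕ :=
  ((Finset.range r).filter fun h => (jChain r n T h).isSome).sup id

/-- `j_h`, defaulting to `0` when undefined. -/
def jval (r n : ℕ) (T : ℕ → GP r) (h : ℕ) : ℕ := (jChain r n T h).getD 0

/-- `ω_c` for `c ∈ {0,±1,…,±r}`: top-justified column of `c` ones if `c ≥ 0`,
bottom-justified column of `|c|` minus-ones if `c < 0`. -/
def omegaGP (r : ℕ) (c : ℤ) : GP r := fun i =>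
  if 0 ≤ c then (if (i : ℕ) < c.natAbs then 1 else 0)
  else (if r - c.natAbs ≤ (i : ℕ) then -1 else 0)

/-- The extremal fluctuating tableau of type `c`: partial sums of the `ω_{c_j}`. -/
def extremal (r : ℕ) (c : ℕ → ℤ) (k : ℕ) : GP r := ∑ j ∈ Finset.range k, omegaGP r (c j)

/-- Lexicographic order: the first nonzero entry of `β - α` is positive. -/
def ltLex {r : ℕ} (α β : GP r) : Prop := ∃ i : Fin r, (∀ j, j < i → α j = β j) ∧ α i < β i

/-- Cumulative sums of `|c_j|` (block boundaries). -/
def cumC (c : ℕ → ℤ) (j : ℕ) : ℕ := ∑ j' ∈ Finset.range j, (c j').natAbs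

/-- Entry `(u,v)` (for `u,v ∈ {1,…,n}`) of the reduced promotion matrix `PMr^i(T)`:
the number of cells in the block `B_u × B_v` whose promotion-matrix entry contains `i`. -/
def PMr (r n t : ℕ) (T : ℕ → GP r) (c : ℕ → ℤ) (i u v : ℕ) : ℕ :=
  (((Finset.Icc (cumC c (u - 1) + 1) (cumC c u)) ×ˢ
    (Finset.Icc (cumC c (v - 1) + 1) (cumC c v))).filter
      fun p => PMmem r n t T i p.1 p.2).card

/-- The set of `r`-row fluctuating tableaux of length `n`, shape `lam`, type `c`,
in bundled (finitely-indexed) form. -/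
def FTset (r n : ℕ) (lam : GP r) (c : Fin n → ℤ) : Set (Fin (n + 1) → GP r) :=
  {T | (∀ k, Antitone (T k)) ∧ T 0 = 0 ∧ T (Fin.last n) = lam ∧
       ∀ j : Fin n, colStep r (c j) (T j.castSucc) (T j.succ)}

/-!
In the growth diagram of the oscillization of `T`, the function `prom_i` records the cells whose
two parallel sides lie on different sides of the boundary below row `i`. For each row of the
diagram the prefix sum of the first `i` coordinates telescopes along these cells, so that exactly
one of them is recorded once the right-hand ends of the rows are known.

The heart of the matter is therefore the shape of the triangle generated by a path from `0` to the
rectangle `m`: its right edge is the dual `m - rev` of its top edge. This follows by comparing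
prefix sums. Assign to a path the largest number of boxes that a set of `l` rows, allowed to move
upwards with time, can collect along it; a local rule slides the path across a row of cells
without increasing this number. Applying this to the triangle and to its reflection yields both
inequalities. As a consequence `P ^ t` is the identity, and the dual symmetry of the infinite
diagram transposes cells while exchanging the boundaries `i` and `r - i`, which makes `prom_{r -
i}` the inverse of `prom_i`. Promotion translates the diagram and evacuation reflects it.

Finally, local rules carry oscillized columns to oscillized columns, so oscillization turns `P`
into `P ^ |c_1|` and commutes with evacuation, which transfers everything to general types.
-/

/-! ### Sorting integer vectors -/

section Sorting

variable {r : ℕ}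

theorem eV_self (x : Fin r) : eV x x = 1 := by simp [eV]

theorem eV_of_ne {x y : Fin r} (h : y ≠ x) : eV x y = 0 := by simp [eV, h]

theorem eV_injective : Function.Injective (eV : Fin r → GP r) := by
  intro x y h
  by_contra hne
  simpa [eV, hne] using congrFun h x

theorem eV_nonneg (x y : Fin r) : 0 ≤ eV x y := by unfold eV; split_ifs <;> decide

theorem sortDesc_antitone (α : GP r) : Antitone (sortDesc α) :=
  fun _ _ hij => Tuple.monotone_sort α (Fin.rev_le_rev.mpr hij)

theorem exists_perm_sortDesc (α : GP r) : ∃ σ : Equiv.Perm (Fin r), sortDesc α = α ∘ σ :=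
  ⟨Fin.revPerm.trans (Tuple.sort α), rfl⟩

theorem sortDesc_comp_perm (α : GP r) (σ : Equiv.Perm (Fin r)) :
    sortDesc (α ∘ σ) = sortDesc α :=
  funext fun i => congrFun (Tuple.comp_perm_comp_sort_eq_comp_sort (f := α) (σ := σ)) i.rev

theorem sortDesc_of_antitone {g : GP r} (hg : Antitone g) : sortDesc g = g := by
  have hmono : Monotone (g ∘ Fin.revPerm) := fun _ _ hij => hg (Fin.rev_le_rev.mpr hij)
  rw [← sortDesc_comp_perm g Fin.revPerm]
  funext i
  simp [sortDesc, Tuple.sort_eq_refl_iff_monotone.mpr hmono]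

theorem sortDesc_eq_sortDesc_iff {α β : GP r} :
    sortDesc α = sortDesc β ↔ ∃ σ : Equiv.Perm (Fin r), α = β ∘ σ := by
  constructor
  · intro h
    obtain ⟨σ, hσ⟩ := exists_perm_sortDesc α
    obtain ⟨τ, hτ⟩ := exists_perm_sortDesc β
    refine ⟨σ.symm.trans τ, funext fun i => ?_⟩
    have := congrFun (hσ.symm.trans (h.trans hτ)) (σ.symm i)
    simpa using this
  · rintro ⟨σ, rfl⟩
    exact sortDesc_comp_perm β σ

theorem sortDesc_add_eV_congr {α β : GP r} (h : sortDesc α = sortDesc β) {x y : Fin r}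
    (hxy : α x = β y) : sortDesc (α + eV x) = sortDesc (β + eV y) := by
  obtain ⟨σ, rfl⟩ := sortDesc_eq_sortDesc_iff.mp h
  refine sortDesc_eq_sortDesc_iff.mpr ⟨σ.trans (Equiv.swap (σ x) y), funext fun i => ?_⟩
  have hβ : β (Equiv.swap (σ x) y (σ i)) = β (σ i) := by
    rcases eq_or_ne (σ i) (σ x) with hx | hx
    · rw [hx, Equiv.swap_apply_left]; exact hxy.symm
    rcases eq_or_ne (σ i) y with hy | hy
    · rw [hy, Equiv.swap_apply_right]; exact hxy
    · rw [Equiv.swap_apply_of_ne_of_ne hx hy]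
  have hiff : Equiv.swap (σ x) y (σ i) = y ↔ i = x := by
    rw [Equiv.swap_apply_eq_iff, Equiv.swap_apply_right, σ.injective.eq_iff]
  simp [eV, hβ, hiff]

theorem revNeg_revNeg (v : GP r) : revNeg (revNeg v) = v := by
  funext i; simp [revNeg]

theorem revNeg_injective : Function.Injective (revNeg : GP r → GP r) :=
  Function.LeftInverse.injective revNeg_revNeg

theorem revNeg_add (v w : GP r) : revNeg (v + w) = revNeg v + revNeg w := by
  funext i; simp only [revNeg, Pi.add_apply]; ring

theorem revNeg_sub (v w : GP r) : revNeg (v - w) = revNeg v - revNeg w := by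
  funext i; simp only [revNeg, Pi.sub_apply]; ring

theorem revNeg_zero : revNeg (0 : GP r) = 0 := by
  funext i; simp [revNeg]

theorem revNeg_eV (x : Fin r) : revNeg (eV x) = - eV x.rev := by
  funext i; simp only [revNeg, eV, Pi.neg_apply, Fin.rev_eq_iff]

theorem sum_revNeg (v : GP r) : ∑ j, revNeg v j = -∑ j, v j := by
  rw [← Equiv.sum_comp Fin.revPerm v]
  simp [revNeg]

theorem revNeg_antitone {v : GP r} (h : Antitone v) : Antitone (revNeg v) :=
  fun _ _ hij => neg_le_neg (h (Fin.rev_le_rev.mpr hij))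

theorem eq_add_eV_iff_revNeg {v w : GP r} {x : Fin r} :
    v = w + eV x ↔ revNeg w = revNeg v + eV x.rev := by
  rw [← revNeg_injective.eq_iff, revNeg_add, revNeg_eV, ← sub_eq_add_neg, eq_sub_iff_add_eq,
    eq_comm]

theorem sortDesc_revNeg (α : GP r) : sortDesc (revNeg α) = revNeg (sortDesc α) := by
  obtain ⟨σ, hσ⟩ := exists_perm_sortDesc α
  rw [← sortDesc_of_antitone (revNeg_antitone (sortDesc_antitone α)), sortDesc_eq_sortDesc_iff]
  refine ⟨Fin.revPerm.trans (σ.symm.trans Fin.revPerm), funext fun i => ?_⟩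
  simp [revNeg, hσ]

theorem sortDesc_sub_eV_congr {α β : GP r} (h : sortDesc α = sortDesc β) {x y : Fin r}
    (hxy : α x = β y) : sortDesc (α - eV x) = sortDesc (β - eV y) := by
  have hrev (γ : GP r) (z : Fin r) : γ - eV z = revNeg (revNeg γ + eV z.rev) := by
    rw [revNeg_add, revNeg_revNeg, revNeg_eV, Fin.rev_rev, sub_eq_add_neg]
  rw [hrev α, hrev β, sortDesc_revNeg, sortDesc_revNeg]
  exact congrArg revNeg (sortDesc_add_eV_congr (by rw [sortDesc_revNeg, h, sortDesc_revNeg])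
    (by simp [revNeg, hxy]))

theorem exists_sortDesc_add_eV {g : GP r} (hg : Antitone g) (x : Fin r) :
    ∃ y ≤ x, g y = g x ∧ sortDesc (g + eV x) = g + eV y := by
  obtain ⟨y, hy, hmin⟩ := (Finset.univ.filter fun z => g z = g x).exists_minimal ⟨x, by simp⟩
  simp only [Finset.mem_filter, Finset.mem_univ, true_and] at hy hmin
  refine ⟨y, (le_total y x).elim id (hmin rfl), hy, ?_⟩
  rw [sortDesc_add_eV_congr rfl hy.symm, sortDesc_of_antitone]
  intro i j hij
  rcases eq_or_ne j y with rfl | hj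
  · rcases hij.eq_or_lt with rfl | hlt
    · rfl
    have hne : g i ≠ g x := fun h => (hmin h hlt.le).not_gt hlt
    have := hg hij
    simp only [Pi.add_apply, eV_self, eV_of_ne hlt.ne]
    omega
  · have := hg hij
    have := eV_nonneg y i
    simp only [Pi.add_apply, eV_of_ne hj]
    omega

theorem exists_sortDesc_sub_eV {g : GP r} (hg : Antitone g) (x : Fin r) :
    ∃ y ≥ x, g y = g x ∧ sortDesc (g - eV x) = g - eV y := by
  obtain ⟨y, hyx, hgy, hsort⟩ := exists_sortDesc_add_eV (revNeg_antitone hg) x.rev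
  have hrev (z : Fin r) : revNeg g + eV z = revNeg (g - eV z.rev) := by
    rw [revNeg_sub, revNeg_eV, Fin.rev_rev, sub_neg_eq_add]
  rw [hrev, hrev, sortDesc_revNeg, Fin.rev_rev] at hsort
  refine ⟨y.rev, Fin.le_rev_iff.mpr hyx, ?_, revNeg_injective hsort⟩
  simpa [revNeg] using hgy

end Sorting

/-! ### The local rule -/

section LocalRule

variable {r : ℕ}

/-- Two vectors differing by a single box, added or removed. -/
def BoxStep (α β : GP r) : Prop := ∃ x, β = α + eV x ∨ α = β + eV x

theorem BoxStep.symm {α β : GP r} (h : BoxStep α β) : BoxStep β α :=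
  h.imp fun _ => Or.symm

theorem BoxStep.revNeg {α β : GP r} (h : BoxStep α β) : BoxStep (revNeg α) (revNeg β) := by
  obtain ⟨x, h | h⟩ := h
  exacts [⟨x.rev, Or.inr (eq_add_eV_iff_revNeg.mp h)⟩, ⟨x.rev, Or.inl (eq_add_eV_iff_revNeg.mp h)⟩]

/-- The fourth corner of a growth diagram cell: the Bender–Knuth involution replaces the middle
term `lam` of `κ → lam → ν` by this vector. -/
def localRule (κ lam ν : GP r) : GP r := sortDesc (ν + κ - lam)

theorem localRule_antitone (κ lam ν : GP r) : Antitone (localRule κ lam ν) :=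
  sortDesc_antitone _

theorem localRule_comm (κ lam ν : GP r) : localRule ν lam κ = localRule κ lam ν := by
  rw [localRule, localRule, add_comm]

theorem localRule_revNeg (κ lam ν : GP r) :
    localRule (revNeg κ) (revNeg lam) (revNeg ν) = revNeg (localRule κ lam ν) := by
  rw [localRule, ← revNeg_add, ← revNeg_sub, sortDesc_revNeg, localRule]

/-- A cell with corners `κ → lam → ν` and `κ → μ → ν` whose sides `κ → lam` and `μ → ν` both add
a box, in rows `a ≤ b` that the local rule forces to have equal length in `κ`. -/
def AddCell (κ lam μ ν : GP r) : Prop :=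
  ∃ a b, a ≤ b ∧ κ a = κ b ∧ lam = κ + eV a ∧ ν = μ + eV b

/-- The dual of `AddCell`: the sides `κ → lam` and `μ → ν` both remove a box. -/
def RemoveCell (κ lam μ ν : GP r) : Prop :=
  ∃ a b, b ≤ a ∧ κ a = κ b ∧ κ = lam + eV a ∧ μ = ν + eV b

/-- A cell of a growth diagram of single boxes: opposite sides `κ → lam` and `μ → ν` are of the same
kind. -/
def GrowthCell (κ lam μ ν : GP r) : Prop := AddCell κ lam μ ν ∨ RemoveCell κ lam μ ν

theorem addCell_localRule_add {κ : GP r} {a x : Fin r} (hκ : Antitone κ)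
    (hν : Antitone (κ + eV a + eV x)) :
    BoxStep κ (localRule κ (κ + eV a) (κ + eV a + eV x)) ∧
      AddCell κ (κ + eV a) (localRule κ (κ + eV a) (κ + eV a + eV x)) (κ + eV a + eV x) := by
  obtain ⟨y, hyx, hgy, hsort⟩ := exists_sortDesc_add_eV hκ x
  have hμ : localRule κ (κ + eV a) (κ + eV a + eV x) = κ + eV y := by
    rw [localRule, ← hsort]; congr 1; abel
  rw [hμ]
  refine ⟨⟨y, Or.inl rfl⟩, ?_⟩
  rcases hyx.eq_or_lt with rfl | hlt
  · exact ⟨a, a, le_rfl, rfl, rfl, by abel⟩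
  have hay : a = y := by
    by_contra hne
    have hνxy := hν hyx
    have := eV_nonneg a x
    simp only [Pi.add_apply, eV_self, eV_of_ne hlt.ne, eV_of_ne (Ne.symm hne)] at hνxy
    omega
  subst hay
  exact ⟨a, x, hyx, hgy, rfl, rfl⟩

theorem addCell_localRule_sub {κ : GP r} {a x : Fin r} (hκ : Antitone κ)
    (hν : Antitone (κ + eV a - eV x)) :
    BoxStep κ (localRule κ (κ + eV a) (κ + eV a - eV x)) ∧
      AddCell κ (κ + eV a) (localRule κ (κ + eV a) (κ + eV a - eV x)) (κ + eV a - eV x) := by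
  obtain ⟨y, hyx, hgy, hsort⟩ := exists_sortDesc_sub_eV hκ x
  have hμ : localRule κ (κ + eV a) (κ + eV a - eV x) = κ - eV y := by
    rw [localRule, ← hsort]; congr 1; abel
  rw [hμ]
  refine ⟨⟨y, Or.inr (by abel)⟩, ?_⟩
  rcases hyx.lt_or_eq with hlt | rfl
  · have hax : a = x := by
      by_contra hne
      have hνxy := hν hyx
      have := eV_nonneg a y
      simp only [Pi.add_apply, Pi.sub_apply, eV_self, eV_of_ne hlt.ne',
        eV_of_ne (Ne.symm hne)] at hνxy
      omega
    subst hax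
    exact ⟨a, y, hyx, hgy.symm, rfl, by abel⟩
  · exact ⟨a, a, le_rfl, rfl, rfl, by abel⟩

theorem AddCell.localRule_eq {κ lam μ ν : GP r} (h : AddCell κ lam μ ν) (hlam : Antitone lam) :
    localRule κ μ ν = lam := by
  obtain ⟨a, b, -, hab, rfl, rfl⟩ := h
  rw [localRule, ← sortDesc_of_antitone hlam, sortDesc_add_eV_congr rfl hab]
  congr 1
  abel

theorem AddCell.revNeg {κ lam μ ν : GP r} (h : AddCell κ lam μ ν) :
    RemoveCell (revNeg κ) (revNeg lam) (revNeg μ) (revNeg ν) := by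
  obtain ⟨a, b, hab, hκ, hlam, hν⟩ := h
  exact ⟨a.rev, b.rev, Fin.rev_le_rev.mpr hab, by simpa [FT.revNeg] using hκ,
    eq_add_eV_iff_revNeg.mp hlam, eq_add_eV_iff_revNeg.mp hν⟩

theorem RemoveCell.revNeg {κ lam μ ν : GP r} (h : RemoveCell κ lam μ ν) :
    AddCell (revNeg κ) (revNeg lam) (revNeg μ) (revNeg ν) := by
  obtain ⟨a, b, hba, hκ, ha, hb⟩ := h
  exact ⟨a.rev, b.rev, Fin.rev_le_rev.mpr hba, by simpa [FT.revNeg] using hκ,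
    eq_add_eV_iff_revNeg.mp ha, eq_add_eV_iff_revNeg.mp hb⟩

theorem RemoveCell.localRule_eq {κ lam μ ν : GP r} (h : RemoveCell κ lam μ ν)
    (hlam : Antitone lam) : localRule κ μ ν = lam := by
  obtain ⟨a, b, -, hab, rfl, rfl⟩ := h
  have hκ : localRule (lam + eV a) (ν + eV b) ν = sortDesc (lam + eV a - eV b) := by
    rw [localRule]; congr 1; abel
  rw [hκ, sortDesc_sub_eV_congr rfl hab.symm, add_sub_cancel_right, sortDesc_of_antitone hlam]

theorem localRule_cell_of_add {κ lam ν : GP r} {a : Fin r} (hκ : Antitone κ)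
    (hν : Antitone ν) (ha : lam = κ + eV a) (hstep : BoxStep lam ν) :
    BoxStep κ (localRule κ lam ν) ∧ AddCell κ lam (localRule κ lam ν) ν := by
  subst ha
  obtain ⟨x, rfl | hx⟩ := hstep
  · exact addCell_localRule_add hκ hν
  · obtain rfl := eq_sub_of_add_eq hx.symm
    exact addCell_localRule_sub hκ hν

theorem localRule_cell {κ lam ν : GP r} (hκ : Antitone κ) (hν : Antitone ν)
    (h₁ : BoxStep κ lam) (h₂ : BoxStep lam ν) :
    BoxStep κ (localRule κ lam ν) ∧
      GrowthCell κ lam (localRule κ lam ν) ν := by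
  obtain ⟨a, ha | ha⟩ := h₁
  · exact (localRule_cell_of_add hκ hν ha h₂).imp_right Or.inl
  · obtain ⟨hbox, hcell⟩ := localRule_cell_of_add (revNeg_antitone hκ) (revNeg_antitone hν)
      (eq_add_eV_iff_revNeg.mp ha) h₂.revNeg
    rw [localRule_revNeg] at hbox hcell
    have hbox' := hbox.revNeg
    have hcell' := hcell.revNeg
    simp only [revNeg_revNeg] at hbox' hcell'
    exact ⟨hbox', Or.inr hcell'⟩

theorem GrowthCell.addCell {κ lam μ ν : GP r} {x : Fin r} (h : GrowthCell κ lam μ ν)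
    (hx : lam = κ + eV x) : AddCell κ lam μ ν := by
  refine h.resolve_right ?_
  rintro ⟨a, -, -, -, ha, -⟩
  have := congrFun (ha.trans (congrArg (· + eV a) hx)) x
  simp only [Pi.add_apply, eV_self] at this
  linarith [eV_nonneg a x]

theorem GrowthCell.boxStep {κ lam μ ν : GP r} (h : GrowthCell κ lam μ ν) : BoxStep μ ν := by
  rcases h with ⟨-, b, -, -, -, hb⟩ | ⟨-, b, -, -, -, hb⟩
  exacts [⟨b, Or.inl hb⟩, ⟨b, Or.inr hb⟩]

theorem GrowthCell.revNeg {κ lam μ ν : GP r} (h : GrowthCell κ lam μ ν) :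
    GrowthCell (revNeg κ) (revNeg lam) (revNeg μ) (revNeg ν) :=
  h.symm.imp RemoveCell.revNeg AddCell.revNeg

theorem GrowthCell.sum_sub_sum {κ lam μ ν : GP r} (h : GrowthCell κ lam μ ν) :
    ∑ j, ν j - ∑ j, μ j = ∑ j, lam j - ∑ j, κ j := by
  rcases h with ⟨a, b, -, -, rfl, rfl⟩ | ⟨a, b, -, -, rfl, rfl⟩ <;>
    simp [Finset.sum_add_distrib, eV]

theorem GrowthCell.localRule_eq {κ lam μ ν : GP r} (h : GrowthCell κ lam μ ν)
    (hlam : Antitone lam) : localRule κ μ ν = lam :=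
  h.elim (·.localRule_eq hlam) (·.localRule_eq hlam)

end LocalRule

/-! ### Row chains and their values -/

section RowChain

variable {r : ℕ}

/-- The sum of the entries of `v`, weighted by the increments of `c`. When `c` is the prefix count
of a set of rows, this is the sum of the entries of `v` in these rows. -/
def pairing (v : GP r) (c : ℕ → ℤ) : ℤ := ∑ k : Fin r, v k * (c (k + 1) - c k)

theorem pairing_add_left (v w : GP r) (c : ℕ → ℤ) :
    pairing (v + w) c = pairing v c + pairing w c := by
  simp only [pairing, Pi.add_apply, add_mul, Finset.sum_add_distrib]

theorem pairing_sub_left (v w : GP r) (c : ℕ → ℤ) :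
    pairing (v - w) c = pairing v c - pairing w c := by
  simp only [pairing, Pi.sub_apply, sub_mul, Finset.sum_sub_distrib]

theorem pairing_zero_left (c : ℕ → ℤ) : pairing (0 : GP r) c = 0 := by simp [pairing]

theorem pairing_eV (p : Fin r) (c : ℕ → ℤ) : pairing (eV p) c = c (p + 1) - c p := by
  simp [pairing, eV]

theorem pairing_add_right (v : GP r) (c d : ℕ → ℤ) :
    pairing v (c + d) = pairing v c + pairing v d := by
  simp only [pairing, Pi.add_apply, ← Finset.sum_add_distrib]
  exact Finset.sum_congr rfl fun _ _ => by ring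

theorem pairing_single (v : GP r) {p q : Fin r} (hpq : (q : ℕ) = p + 1) (β : ℤ) :
    pairing v (Pi.single (q : ℕ) β) = β * (v p - v q) := by
  have hterm (k : Fin r) : v k * ((Pi.single (q : ℕ) β : ℕ → ℤ) (k + 1) -
      (Pi.single (q : ℕ) β : ℕ → ℤ) k) =
        (if k = p then β * v k else 0) - (if k = q then β * v k else 0) := by
    have hp : ((k : ℕ) + 1 = q) ↔ k = p := by rw [Fin.ext_iff]; omega
    simp only [Pi.single_apply, hp, ← Fin.ext_iff]
    split_ifs <;> ring
  simp only [pairing, hterm, Finset.sum_sub_distrib, Finset.sum_ite_eq', Finset.mem_univ, if_true]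
  ring

theorem pairing_eq_of_increments (v : GP r) {c : ℕ → ℤ} {d : Fin r → ℤ}
    (h : ∀ k : Fin r, c (k + 1) - c k = d k) : pairing v c = ∑ k, v k * d k :=
  Finset.sum_congr rfl fun k _ => by rw [h]

theorem pairing_min (v : GP r) (l : ℕ) :
    pairing v (fun k => ((min k l : ℕ) : ℤ)) = pSum v l := by
  rw [pairing_eq_of_increments v (d := fun k => if (k : ℕ) < l then 1 else 0)
    (fun k => by split_ifs <;> omega), pSum, Finset.sum_filter]
  simp

theorem pairing_tsub (v : GP r) (l : ℕ) :
    pairing v (fun k => ((k - l : ℕ) : ℤ)) = ∑ j, v j - pSum v l := by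
  rw [pairing_eq_of_increments v (d := fun k => 1 - if (k : ℕ) < l then 1 else 0)
    (fun k => by split_ifs <;> omega), pSum, Finset.sum_filter]
  simp [mul_sub]

theorem last_mul_le_pairing {v : GP (r + 1)} (hv : Antitone v) {g : ℕ → ℤ} (h₀ : g 0 = 0)
    (hg : ∀ k ≤ r + 1, 0 ≤ g k) : v (Fin.last r) * g (r + 1) ≤ pairing v g := by
  induction r with
  | zero => simp [pairing, h₀]
  | succ r ih =>
    have hinit := ih (v := v ∘ Fin.castSucc) (fun _ _ h => hv (Fin.castSucc_le_castSucc_iff.mpr h))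
      (fun k hk => hg k (by omega))
    have hlast : v (Fin.last (r + 1)) ≤ v (Fin.last r).castSucc := hv (Fin.le_last _)
    have hnonneg := hg (r + 1) (by omega)
    simp only [pairing, Function.comp_apply] at hinit ⊢
    rw [Fin.sum_univ_castSucc]
    simp only [Fin.val_castSucc, Fin.val_last] at hinit ⊢
    nlinarith

theorem pairing_mono {v : GP r} (hv : Antitone v) {c d : ℕ → ℤ} (h₀ : c 0 = d 0)
    (hr : c r = d r) (hle : ∀ k ≤ r, c k ≤ d k) : pairing v c ≤ pairing v d := by
  cases r with
  | zero => simp [pairing]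
  | succ r =>
    have habel := last_mul_le_pairing hv (g := d - c) (by simp [h₀])
      fun k hk => sub_nonneg.mpr (hle k hk)
    have hadd := pairing_add_right v c (d - c)
    rw [add_sub_cancel] at hadd
    simp only [Pi.sub_apply, hr, sub_self, mul_zero] at habel
    omega

/-- A sequence of `l`-element sets of rows moving upwards with time; the set at time `v` is encoded
by its prefix counts: `c v k` of its elements are among the first `k` rows. -/
structure RowChain (r : ℕ) (l : ℤ) (c : ℕ → ℕ → ℤ) : Prop where
  zero : ∀ v, c v 0 = 0
  top : ∀ v, c v r = l
  le_succ : ∀ v, ∀ k < r, c v k ≤ c v (k + 1)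
  succ_le : ∀ v, ∀ k < r, c v (k + 1) ≤ c v k + 1
  le_next : ∀ v, ∀ k ≤ r, c v k ≤ c (v + 1) k

theorem RowChain.le_natCast {l : ℤ} {c : ℕ → ℕ → ℤ} (hc : RowChain r l c) (v : ℕ) {k : ℕ}
    (hk : k ≤ r) : c v k ≤ k := by
  induction k with
  | zero => simp [hc.zero]
  | succ k ih =>
    have := hc.succ_le v k hk
    have := ih (by omega)
    push_cast
    omega

theorem RowChain.le_card {l : ℤ} {c : ℕ → ℕ → ℤ} (hc : RowChain r l c) (v : ℕ) {k : ℕ}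
    (hk : k ≤ r) : c v k ≤ l := by
  induction hk using Nat.decreasingInduction with
  | self => exact (hc.top v).le
  | of_succ k hk ih => exact (hc.le_succ v k hk).trans ih

/-- The chain formed by the complements of the reflected sets of a chain of `l`-element sets. -/
def dualChain (r : ℕ) (l : ℤ) (c : ℕ → ℕ → ℤ) : ℕ → ℕ → ℤ := fun v k => k - l + c v (r - k)

theorem RowChain.dual {l : ℤ} {c : ℕ → ℕ → ℤ} (hc : RowChain r l c) :
    RowChain r (r - l) (dualChain r l c) where
  zero v := by simp [dualChain, hc.top]
  top v := by simp [dualChain, hc.zero]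
  le_succ v k hk := by
    have := hc.succ_le v (r - (k + 1)) (by omega)
    rw [show r - (k + 1) + 1 = r - k by omega] at this
    simp only [dualChain]
    push_cast
    omega
  succ_le v k hk := by
    have := hc.le_succ v (r - (k + 1)) (by omega)
    rw [show r - (k + 1) + 1 = r - k by omega] at this
    simp only [dualChain]
    push_cast
    omega
  le_next v k _ := by
    have := hc.le_next v (r - k) (by omega)
    simp only [dualChain]
    omega

theorem pairing_revNeg_dualChain (v : GP r) (l : ℤ) (c : ℕ → ℕ → ℤ) (s : ℕ) :
    pairing (revNeg v) (dualChain r l c s) = pairing v (c s) - ∑ j, v j := by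
  rw [pairing, pairing, ← Equiv.sum_comp Fin.revPerm, ← Finset.sum_sub_distrib]
  refine Finset.sum_congr rfl fun j _ => ?_
  have hj : r - (r - (j + 1) : ℕ) = (j : ℕ) + 1 := by omega
  have hj' : r - (r - ((j : ℕ) + 1) + 1) = j := by omega
  simp only [revNeg, dualChain, Fin.revPerm_apply, Fin.rev_rev, Fin.val_rev, hj, hj']
  push_cast
  ring

/-- The signed number of boxes that the path `η` collects between times `u` and `t` in the rows of
the chain `c`. -/
def chainValue (η : ℕ → GP r) (c : ℕ → ℕ → ℤ) (u t : ℕ) : ℤ :=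
  ∑ v ∈ Finset.Ico u t, pairing (η (v + 1) - η v) (c (v + 1))

theorem chainValue_congr {η η' : ℕ → GP r} {c : ℕ → ℕ → ℤ} {u t : ℕ}
    (h : ∀ v, u ≤ v → v < t → η (v + 1) - η v = η' (v + 1) - η' v) :
    chainValue η c u t = chainValue η' c u t :=
  Finset.sum_congr rfl fun v hv => by
    rw [h v (Finset.mem_Ico.mp hv).1 (Finset.mem_Ico.mp hv).2]

theorem chainValue_const (η : ℕ → GP r) (d : ℕ → ℤ) {u t : ℕ} (hut : u ≤ t) :
    chainValue η (fun _ => d) u t = pairing (η t) d - pairing (η u) d := by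
  simp only [chainValue, pairing_sub_left]
  exact Finset.sum_Ico_sub (fun v => pairing (η v) d) hut

theorem chainValue_revNeg_dualChain (η : ℕ → GP r) (l : ℤ) (c : ℕ → ℕ → ℤ) {u t : ℕ}
    (hut : u ≤ t) : chainValue (fun v => revNeg (η v)) (dualChain r l c) u t =
      chainValue η c u t - (∑ j, η t j - ∑ j, η u j) := by
  simp only [chainValue, ← revNeg_sub, pairing_revNeg_dualChain, Pi.sub_apply,
    Finset.sum_sub_distrib]
  rw [← Finset.sum_sub_distrib, Finset.sum_Ico_sub (fun v => ∑ j, η v j) hut]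

/-- Every chain of `l` rows collects at most `N` boxes of the path `η` between `u` and `t`. -/
def ChainBound (l : ℤ) (η : ℕ → GP r) (u t : ℕ) (N : ℤ) : Prop :=
  ∀ c, RowChain r l c → chainValue η c u t ≤ N

theorem ChainBound.congr {l N : ℤ} {η η' : ℕ → GP r} {u t : ℕ} (hB : ChainBound l η u t N)
    (h : ∀ v, u ≤ v → v < t → η' (v + 1) - η' v = η (v + 1) - η v) :
    ChainBound l η' u t N :=
  fun c hc => (chainValue_congr h).trans_le (hB c hc)

theorem ChainBound.of_revNeg {l N : ℤ} {η : ℕ → GP r} {u t : ℕ} (hut : u ≤ t)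
    (hB : ChainBound (r - l) (fun v => revNeg (η v)) u t (N - (∑ j, η t j - ∑ j, η u j))) :
    ChainBound l η u t N := by
  intro c hc
  have := hB _ hc.dual
  rw [chainValue_revNeg_dualChain η l c hut] at this
  omega

theorem ChainBound.revNeg {l N : ℤ} {η : ℕ → GP r} {u t : ℕ} (hut : u ≤ t)
    (hB : ChainBound l η u t N) :
    ChainBound (r - l) (fun v => revNeg (η v)) u t (N - (∑ j, η t j - ∑ j, η u j)) := by
  refine ChainBound.of_revNeg hut ?_
  simp only [sub_sub_cancel, revNeg_revNeg]
  convert hB using 1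
  rw [sum_revNeg, sum_revNeg]
  ring

theorem chainBound_pSum {η : ℕ → GP r} {u t : ℕ} (hut : u ≤ t) (l : ℕ)
    (hη : ∀ v, u ≤ v → v ≤ t → Antitone (η v)) (h₀ : η u = 0) :
    ChainBound l η u t (pSum (η t) l) := by
  intro c hc
  have hpartial : ∀ s, u ≤ s → s ≤ t → chainValue η c u s ≤ pairing (η s) (c s) := by
    intro s hus
    induction s, hus using Nat.le_induction with
    | base => simp [chainValue, h₀, pairing_zero_left]
    | succ s hs ih =>
      intro hst
      have hmono := pairing_mono (hη s hs (by omega)) (c := c s) (d := c (s + 1))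
        (by rw [hc.zero, hc.zero]) (by rw [hc.top, hc.top]) (hc.le_next s)
      have := ih (by omega)
      rw [chainValue, Finset.sum_Ico_succ_top hs, ← chainValue, pairing_sub_left]
      omega
  refine (hpartial t hut le_rfl).trans ?_
  rw [← pairing_min]
  have hmin : ∀ k ≤ r, c t k ≤ ((min k l : ℕ) : ℤ) := fun k hk => by
    rw [Nat.cast_min]
    exact le_min (hc.le_natCast t hk) (hc.le_card t hk)
  have htop := hmin r le_rfl
  refine pairing_mono (hη t hut le_rfl) (by simp [hc.zero]) (htop.antisymm ?_) hmin
  rw [hc.top]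
  exact_mod_cast min_le_right r l

theorem ChainBound.suffix_le {η : ℕ → GP r} {u t : ℕ} (hut : u ≤ t) {k : ℕ} {N : ℤ}
    (h : ChainBound ((r - k : ℕ) : ℤ) η u t N) :
    (∑ j, η t j - pSum (η t) k) - (∑ j, η u j - pSum (η u) k) ≤ N := by
  have hc : RowChain r ((r - k : ℕ) : ℤ) fun _ j => ((j - k : ℕ) : ℤ) := by
    constructor <;> intros <;> omega
  have := h _ hc
  rwa [chainValue_const η _ hut, pairing_tsub, pairing_tsub] at this

end RowChain

/-! ### Sliding a path across a row of cells -/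

section Slide

variable {r : ℕ} {l N : ℤ} {u t : ℕ}

-- At the times in `B` the set contains `q` but not the row `p` above it, and `p` replaces `q`.
theorem RowChain.raise {c : ℕ → ℕ → ℤ} (hc : RowChain r l c) {p q : Fin r}
    (hpq : (q : ℕ) = p + 1) {B : ℕ → Prop}
    (hB : ∀ v, B v → c v (q + 1) = c v q + 1 ∧ c v q = c v p)
    (hnext : ∀ v, B v → c (v + 1) (q + 1) = c (v + 1) q + 1 → c (v + 1) q = c (v + 1) p →
      B (v + 1)) :
    RowChain r l (fun v => c v + Pi.single (q : ℕ) (if B v then 1 else 0)) where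
  zero v := by simp [hc.zero, hpq]
  top v := by simp [hc.top, q.isLt.ne']
  le_succ v k hk := by
    have := hc.le_succ v k hk
    simp only [Pi.add_apply, Pi.single_apply]
    rcases eq_or_ne k q with rfl | hkq
    · have := hB v
      split_ifs <;> grind
    · split_ifs <;> omega
  succ_le v k hk := by
    have := hc.succ_le v k hk
    simp only [Pi.add_apply, Pi.single_apply]
    rcases eq_or_ne (k + 1) q with hkq | hkq
    · have := hB v
      have hkp : k = p := by omega
      split_ifs <;> grind
    · split_ifs <;> omega
  le_next v k hk := by
    have := hc.le_next v k hk
    simp only [Pi.add_apply, Pi.single_apply]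
    rcases eq_or_ne k q with rfl | hkq
    · have := hB v
      have := hnext v
      have := hc.le_next v p p.2.le
      have := hc.le_next v (q + 1) q.2
      have := hc.succ_le (v + 1) q q.2
      have := hc.le_succ (v + 1) p p.2
      rw [← hpq] at this
      split_ifs <;> grind
    · simpa [hkq] using this

theorem sum_Ico_ite_eq_sub (X : ℕ → ℤ) {B : ℕ → Prop} {s : ℕ} (hus : u ≤ s) (hst : s < t)
    (hlt : ∀ v, B v → s < v) (hfirst : B (s + 1)) (hdown : ∀ v, s < v → B (v + 1) → B v) :
    ∃ e, s < e ∧ e ≤ t ∧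
      ∑ v ∈ Finset.Ico u t, (if B (v + 1) then X (v + 1) - X v else 0) = X e - X s := by
  have hse : s + 1 ≤ Nat.findGreatest B t := Nat.le_findGreatest hst hfirst
  have het := Nat.findGreatest_le (P := B) t
  have hBe : B (Nat.findGreatest B t) := Nat.findGreatest_spec hst hfirst
  have hmax : ∀ v ≤ t, B v → v ≤ Nat.findGreatest B t := fun v => Nat.le_findGreatest
  generalize Nat.findGreatest B t = e at hse het hBe hmax
  have hdownward : ∀ v ≤ e, s < v → B v := by
    intro v hve
    induction hve using Nat.decreasingInduction with
    | self => exact fun _ => hBe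
    | of_succ v _ ih => exact fun hsv => hdown v hsv (ih (by omega))
  have hiff : ∀ v < t, B (v + 1) ↔ s ≤ v ∧ v < e := fun v hv =>
    ⟨fun hb => ⟨Nat.lt_succ_iff.mp (hlt _ hb), hmax _ hv hb⟩,
      fun ⟨_, hve⟩ => hdownward _ hve (by omega)⟩
  refine ⟨e, hse, het, ?_⟩
  rw [← Finset.sum_Ico_sub X (by omega : s ≤ e), ← Finset.sum_filter]
  refine Finset.sum_congr (Finset.ext fun v => ?_) fun _ _ => rfl
  rw [Finset.mem_filter, Finset.mem_Ico, Finset.mem_Ico]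
  have := hiff v
  constructor
  · rintro ⟨⟨-, hvt⟩, hb⟩
    exact (this hvt).mp hb
  · rintro ⟨hsv, hve⟩
    exact ⟨⟨by omega, by omega⟩, (this (by omega)).mpr ⟨hsv, hve⟩⟩

theorem chainValue_add_ite (η : ℕ → GP r) (d : GP r) (c : ℕ → ℕ → ℤ) {s : ℕ} (hus : u ≤ s)
    (hst : s < t) : chainValue (fun v => η v + if v ≤ s then d else 0) c u t =
      chainValue η c u t - pairing d (c (s + 1)) := by
  have hterm (v : ℕ) : pairing ((η (v + 1) + if v + 1 ≤ s then d else 0) -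
      (η v + if v ≤ s then d else 0)) (c (v + 1)) =
        pairing (η (v + 1) - η v) (c (v + 1)) - if v = s then pairing d (c (v + 1)) else 0 := by
    simp only [pairing_sub_left, pairing_add_left]
    split_ifs <;> first | omega | (simp only [pairing_zero_left]; ring)
  simp only [chainValue, hterm, Finset.sum_sub_distrib, Finset.sum_ite_eq', Finset.mem_Ico, hus,
    hst, and_self, if_true]

theorem ChainBound.move_box {ζ : ℕ → GP r} {p q : Fin r} (hpq : (q : ℕ) = p + 1) {s : ℕ}
    (hus : u ≤ s) (hst : s < t) (hB : ChainBound l ζ u t N)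
    (hζ : ∀ v, s < v → v ≤ t → ζ s p - ζ s q < ζ v p - ζ v q) :
    ChainBound l (fun v => ζ v + if v ≤ s then eV p - eV q else 0) u t N := by
  intro c hc
  rw [chainValue_add_ite ζ _ c hus hst, pairing_sub_left, pairing_eV, pairing_eV, ← hpq]
  let IsBad (v : ℕ) : Prop := c v (q + 1) = c v q + 1 ∧ c v q = c v p
  by_cases hbad : IsBad (s + 1)
  swap
  · have := hB c hc
    have := hc.le_succ (s + 1) p p.2
    have := hc.succ_le (s + 1) q q.2
    have := hc.le_succ (s + 1) q q.2
    simp only [IsBad] at hbad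
    rw [← hpq] at *
    omega
  obtain ⟨B, hBiff⟩ : ∃ B : ℕ → Prop, ∀ v, B v ↔ s < v ∧ ∀ w, s < w → w ≤ v → IsBad w :=
    ⟨_, fun _ => Iff.rfl⟩
  have hraise := hB _ (hc.raise hpq (B := B) (fun v hv => ((hBiff v).mp hv).2 v
    ((hBiff v).mp hv).1 le_rfl) (fun v hv h₁ h₂ => by grind))
  obtain ⟨e, hse, het, hsum⟩ := sum_Ico_ite_eq_sub (fun v => ζ v p - ζ v q) (B := B) hus hst
    (fun v hv => ((hBiff v).mp hv).1) (by grind) (by grind)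
  have hvalue : chainValue ζ (fun v => c v + Pi.single (q : ℕ) (if B v then 1 else 0)) u t =
      chainValue ζ c u t + ((ζ e p - ζ e q) - (ζ s p - ζ s q)) := by
    rw [← hsum, chainValue, chainValue, ← Finset.sum_add_distrib]
    refine Finset.sum_congr rfl fun v _ => ?_
    rw [pairing_add_right, pairing_single _ hpq]
    split_ifs <;> simp only [Pi.sub_apply] <;> ring
  have := hζ e hse het
  have := hbad.1
  have := hbad.2
  omega

theorem exists_jump {A : ℕ → Prop} (hut : u ≤ t) (hA : ∀ v, u ≤ v → v < t → A v → A (v + 1)) :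
    (∀ v, u ≤ v → v ≤ t → ¬ A v) ∨ (∀ v, u ≤ v → v ≤ t → A v) ∨
      ∃ s, u ≤ s ∧ s < t ∧ ∀ v, u ≤ v → v ≤ t → (v ≤ s ↔ ¬ A v) := by
  induction t, hut using Nat.le_induction with
  | base => grind
  | succ t hut ih =>
    have hlast := hA t hut (by omega)
    rcases ih fun v h₁ h₂ => hA v h₁ (by omega) with hnone | hall | ⟨s, hus, hst, hs⟩
    · by_cases h : A (t + 1)
      · exact Or.inr (Or.inr ⟨t, hut, by omega, by grind⟩)
      · exact Or.inl (by grind)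
    · exact Or.inr (Or.inl (by grind))
    · exact Or.inr (Or.inr ⟨s, hus, by omega, by grind⟩)

theorem eV_max_castSucc {n : ℕ} (i : Fin n) (x : Fin (n + 1)) :
    (eV (max x i.castSucc) : GP (n + 1)) =
      eV (max x i.succ) + if i.succ ≤ x then 0 else eV i.castSucc - eV i.succ := by
  split_ifs with h
  · rw [max_eq_left (i.castSucc_lt_succ.le.trans h), max_eq_left h, add_zero]
  · rw [max_eq_right (Fin.le_castSucc_iff.mpr (not_le.mp h)), max_eq_right (not_le.mp h).le,
      add_sub_cancel]

theorem ChainBound.move_max_of_jump {n : ℕ} {η : ℕ → GP (n + 1)} {w : ℕ → Fin (n + 1)}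
    (hη' : ∀ v, u ≤ v → v ≤ t → Antitone (η v + eV (w v))) {i : Fin n} {s : ℕ} (hus : u ≤ s)
    (hst : s < t) (hjump : ∀ v, u ≤ v → v ≤ t → (v ≤ s ↔ ¬ i.succ ≤ w v))
    (hs : η s i.castSucc ≤ η s i.succ)
    (hB : ChainBound l (fun v => η v + eV (max (w v) i.succ)) u t N) :
    ChainBound l (fun v => η v + eV (max (w v) i.castSucc)) u t N := by
  have hstrict (v : ℕ) (hsv : s < v) (hvt : v ≤ t) :
      (η s + eV (max (w s) i.succ)) i.castSucc - (η s + eV (max (w s) i.succ)) i.succ <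
        (η v + eV (max (w v) i.succ)) i.castSucc - (η v + eV (max (w v) i.succ)) i.succ := by
    have hlow := not_le.mp ((hjump s hus hst.le).mp le_rfl)
    have hhigh : i.succ ≤ w v := by
      by_contra h
      exact hsv.not_ge ((hjump v (by omega) hvt).mpr h)
    have := hη' v (by omega) hvt i.castSucc_lt_succ.le
    rw [max_eq_left hhigh, max_eq_right hlow.le]
    simp only [Pi.add_apply, eV_self, eV_of_ne i.castSucc_lt_succ.ne] at this ⊢
    omega
  have hmove := hB.move_box (p := i.castSucc) (q := i.succ) rfl hus hst hstrict
  have heV (v : ℕ) (h₁ : u ≤ v) (h₂ : v ≤ t) : (eV (max (w v) i.castSucc) : GP (n + 1)) =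
      eV (max (w v) i.succ) + if v ≤ s then eV i.castSucc - eV i.succ else 0 := by
    simp only [eV_max_castSucc, hjump v h₁ h₂, ite_not]
  refine hmove.congr fun v h₁ h₂ => ?_
  simp only [heV v h₁ h₂.le, heV (v + 1) (by omega) h₂, add_assoc]

theorem ChainBound.move_max {n : ℕ} {η : ℕ → GP (n + 1)} {w : ℕ → Fin (n + 1)} (hut : u ≤ t)
    (hη : ∀ v, u ≤ v → v ≤ t → Antitone (η v))
    (hη' : ∀ v, u ≤ v → v ≤ t → Antitone (η v + eV (w v)))
    (hw : ∀ v, u ≤ v → v < t → w v ≤ w (v + 1) ∧ η v (w v) = η v (w (v + 1))) (i : Fin n)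
    (hB : ChainBound l (fun v => η v + eV (max (w v) i.succ)) u t N) :
    ChainBound l (fun v => η v + eV (max (w v) i.castSucc)) u t N := by
  rcases exists_jump (A := fun v => i.succ ≤ w v) hut fun v h₁ h₂ h => h.trans (hw v h₁ h₂).1
    with hnone | hall | ⟨s, hus, hst, hjump⟩
  · refine hB.congr fun v h₁ h₂ => ?_
    simp only [eV_max_castSucc, hnone v h₁ h₂.le, hnone (v + 1) (by omega) h₂, if_false]
    abel
  · refine hB.congr fun v h₁ h₂ => ?_
    simp only [eV_max_castSucc, hall v h₁ h₂.le, hall (v + 1) (by omega) h₂, if_true, add_zero]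
  · refine hB.move_max_of_jump hη' hus hst hjump ?_
    have hlow : ¬ i.succ ≤ w s := (hjump s hus hst.le).mp le_rfl
    have hhigh : i.succ ≤ w (s + 1) := by
      by_contra h
      exact s.lt_succ_self.not_ge ((hjump (s + 1) (by omega) hst).mpr h)
    calc η s i.castSucc ≤ η s (w s) := hη s hus hst.le (Fin.le_castSucc_iff.mpr (not_le.mp hlow))
      _ = η s (w (s + 1)) := (hw s hus hst).2
      _ ≤ η s i.succ := hη s hus hst.le hhigh

theorem ChainBound.slide_add {η η' : ℕ → GP r} {w : ℕ → Fin r} (hut : u ≤ t)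
    (hη : ∀ v, u ≤ v → v ≤ t → Antitone (η v)) (hη' : ∀ v, u ≤ v → v ≤ t → Antitone (η' v))
    (hadd : ∀ v, u ≤ v → v ≤ t → η' v = η v + eV (w v))
    (hw : ∀ v, u ≤ v → v < t → w v ≤ w (v + 1) ∧ η v (w v) = η v (w (v + 1)))
    (hB : ChainBound l η u t N) : ChainBound l η' u t N := by
  cases r with
  | zero => exact (w 0).elim0
  | succ n =>
    have hη'' : ∀ v, u ≤ v → v ≤ t → Antitone (η v + eV (w v)) := fun v h₁ h₂ =>
      hadd v h₁ h₂ ▸ hη' v h₁ h₂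
    have hmax (i : Fin (n + 1)) : ChainBound l (fun v => η v + eV (max (w v) i)) u t N := by
      induction i using Fin.reverseInduction with
      | last => exact hB.congr fun v _ _ => by simp only [max_eq_right (Fin.le_last _)]; abel
      | cast i ih => exact ih.move_max hut hη hη'' hw
    refine (hmax 0).congr fun v h₁ h₂ => ?_
    simp only [max_eq_left (Fin.zero_le _), hadd v h₁ h₂.le, hadd (v + 1) (by omega) h₂]

theorem ChainBound.slide_of_add {η η' : ℕ → GP r} (hut : u ≤ t)
    (hη : ∀ v, u ≤ v → v ≤ t → Antitone (η v)) (hη' : ∀ v, u ≤ v → v ≤ t → Antitone (η' v))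
    (h₀ : ∃ x, η' u = η u + eV x)
    (hcell : ∀ v, u ≤ v → v < t → GrowthCell (η v) (η' v) (η (v + 1)) (η' (v + 1)))
    (hB : ChainBound l η u t N) : ChainBound l η' u t N := by
  have hadd : ∀ v, u ≤ v → v ≤ t → ∃ x, η' v = η v + eV x := by
    intro v huv
    induction v, huv using Nat.le_induction with
    | base => exact fun _ => h₀
    | succ v huv ih =>
      intro hvt
      obtain ⟨x, hx⟩ := ih (by omega)
      obtain ⟨-, b, -, -, -, hb⟩ := (hcell v huv hvt).addCell hx
      exact ⟨b, hb⟩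
  have : Nonempty (Fin r) := h₀.nonempty
  choose! w hw using hadd
  refine hB.slide_add hut hη hη' hw fun v huv hvt => ?_
  obtain ⟨a, b, hab, hκ, ha, hb⟩ := (hcell v huv hvt).addCell (hw v huv hvt.le)
  rw [hw v huv hvt.le] at ha
  rw [hw (v + 1) (by omega) hvt] at hb
  rw [eV_injective (add_left_cancel ha), eV_injective (add_left_cancel hb)]
  exact ⟨hab, hκ⟩

theorem ChainBound.slide {η η' : ℕ → GP r} (hut : u ≤ t)
    (hη : ∀ v, u ≤ v → v ≤ t → Antitone (η v)) (hη' : ∀ v, u ≤ v → v ≤ t → Antitone (η' v))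
    (h₀ : BoxStep (η u) (η' u))
    (hcell : ∀ v, u ≤ v → v < t → GrowthCell (η v) (η' v) (η (v + 1)) (η' (v + 1)))
    (hB : ChainBound l η u t N) : ChainBound l η' u t N := by
  obtain ⟨x, hx | hx⟩ := h₀
  · exact hB.slide_of_add hut hη hη' ⟨x, hx⟩ hcell
  have hincr : ∑ j, η' t j - ∑ j, η' u j = ∑ j, η t j - ∑ j, η u j := by
    have hdiff : ∀ v, u ≤ v → v ≤ t → ∑ j, η' v j - ∑ j, η v j = ∑ j, η' u j - ∑ j, η u j := by
      intro v huv
      induction v, huv using Nat.le_induction with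
      | base => exact fun _ => rfl
      | succ v huv ih =>
        intro hvt
        rw [← ih (by omega), (hcell v huv hvt).sum_sub_sum]
    linarith [hdiff t hut le_rfl]
  refine ChainBound.of_revNeg hut ?_
  rw [hincr]
  exact (hB.revNeg hut).slide_of_add hut (fun v h₁ h₂ => revNeg_antitone (hη v h₁ h₂))
    (fun v h₁ h₂ => revNeg_antitone (hη' v h₁ h₂)) ⟨x.rev, eq_add_eV_iff_revNeg.mp hx⟩
    fun v h₁ h₂ => (hcell v h₁ h₂).revNeg

end Slide

/-! ### Growth triangles -/

section PrefixSums

variable {r : ℕ}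

theorem pSum_zero (v : GP r) : pSum v 0 = 0 := by simp [pSum]

theorem pSum_succ (v : GP r) {i : ℕ} (hi : i < r) : pSum v (i + 1) = pSum v i + v ⟨i, hi⟩ := by
  have hinsert : (Finset.univ.filter fun j : Fin r => (j : ℕ) < i + 1) =
      insert ⟨i, hi⟩ (Finset.univ.filter fun j : Fin r => (j : ℕ) < i) := by
    ext j
    simp only [Finset.mem_filter_univ, Finset.mem_insert, Fin.ext_iff]
    omega
  rw [pSum, hinsert, Finset.sum_insert (by simp), pSum, add_comm]

theorem pSum_top (v : GP r) : pSum v r = ∑ j, v j := by simp [pSum]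

theorem pSum_add (v w : GP r) (i : ℕ) : pSum (v + w) i = pSum v i + pSum w i := by
  simp [pSum, Finset.sum_add_distrib]

theorem pSum_sub (v w : GP r) (i : ℕ) : pSum (v - w) i = pSum v i - pSum w i := by
  simp [pSum, Finset.sum_sub_distrib]

theorem pSum_const (m : ℤ) {k : ℕ} (hk : k ≤ r) : pSum (Function.const (Fin r) m) k = k * m := by
  induction k with
  | zero => simp [pSum_zero]
  | succ k ih =>
    rw [pSum_succ _ hk, ih (by omega), Function.const_apply]
    push_cast
    ring

theorem pSum_ext {v w : GP r} (h : ∀ i ≤ r, pSum v i = pSum w i) : v = w := by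
  ext ⟨i, hi⟩
  have hsucc := h (i + 1) hi
  rwa [pSum_succ _ hi, pSum_succ _ hi, h i hi.le, add_left_cancel_iff] at hsucc

theorem pSum_revNeg (v : GP r) {k : ℕ} (hk : k ≤ r) :
    pSum (revNeg v) (r - k) = pSum v k - ∑ j, v j := by
  rw [pSum, pSum, Finset.sum_filter, Finset.sum_filter, ← Finset.sum_sub_distrib,
    ← Equiv.sum_comp Fin.revPerm]
  refine Finset.sum_congr rfl fun j _ => ?_
  have hj : (j.rev : ℕ) < r - k ↔ ¬ (j : ℕ) < k := by rw [Fin.val_rev]; omega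
  simp only [Fin.revPerm_apply, revNeg, Fin.rev_rev, hj]
  split_ifs <;> ring

end PrefixSums

section GrowthTriangle

variable {r t : ℕ}

/-- A triangular array `G j v`, for `0 ≤ j ≤ v ≤ t`, of generalized partitions that starts with
empty shapes on the diagonal and obeys the local rule in both diagonal directions. -/
structure GrowthTriangle (t : ℕ) (G : ℕ → ℕ → GP r) : Prop where
  diag : ∀ j ≤ t, G j j = 0
  antitone : ∀ j v, j ≤ v → v ≤ t → Antitone (G j v)
  boxStep_right : ∀ j v, j ≤ v → v < t → BoxStep (G j v) (G j (v + 1))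
  boxStep_up : ∀ j v, j < v → v ≤ t → BoxStep (G (j + 1) v) (G j v)
  rule : ∀ j v, j < v → v < t →
    G (j + 1) (v + 1) = localRule (G (j + 1) v) (G j v) (G j (v + 1))
  rule_symm : ∀ j v, j < v → v < t →
    G j v = localRule (G (j + 1) v) (G (j + 1) (v + 1)) (G j (v + 1))

variable {G : ℕ → ℕ → GP r}

theorem GrowthTriangle.growthCell (h : GrowthTriangle t G) {j v : ℕ} (hjv : j < v) (hvt : v < t) :
    GrowthCell (G (j + 1) v) (G j v) (G (j + 1) (v + 1)) (G j (v + 1)) := by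
  rw [h.rule j v hjv hvt]
  exact (localRule_cell (h.antitone _ _ (by omega) (by omega))
    (h.antitone _ _ (by omega) (by omega)) (h.boxStep_up j v hjv hvt.le)
    (h.boxStep_right j v hjv.le hvt)).2

theorem GrowthTriangle.revNeg (h : GrowthTriangle t G) :
    GrowthTriangle t fun j v => FT.revNeg (G j v) where
  diag j hj := by rw [h.diag j hj, revNeg_zero]
  antitone j v hjv hvt := revNeg_antitone (h.antitone j v hjv hvt)
  boxStep_right j v hjv hvt := (h.boxStep_right j v hjv hvt).revNeg
  boxStep_up j v hjv hvt := (h.boxStep_up j v hjv hvt).revNeg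
  rule j v hjv hvt := by rw [h.rule j v hjv hvt, localRule_revNeg]
  rule_symm j v hjv hvt := by rw [localRule_revNeg, ← h.rule_symm j v hjv hvt]

theorem GrowthTriangle.reflect (h : GrowthTriangle t G) :
    GrowthTriangle t fun j v => G (t - v) (t - j) where
  diag j _ := h.diag _ (by omega)
  antitone j v _ _ := h.antitone _ _ (by omega) (by omega)
  boxStep_right j v _ _ := by
    have := h.boxStep_up (t - (v + 1)) (t - j) (by omega) (by omega)
    rwa [show t - (v + 1) + 1 = t - v by omega] at this
  boxStep_up j v _ _ := by
    have := h.boxStep_right (t - v) (t - (j + 1)) (by omega) (by omega)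
    rwa [show t - (j + 1) + 1 = t - j by omega] at this
  rule j v _ _ := by
    have := h.rule_symm (t - (v + 1)) (t - (j + 1)) (by omega) (by omega)
    rwa [show t - (v + 1) + 1 = t - v by omega, show t - (j + 1) + 1 = t - j by omega] at this
  rule_symm j v _ _ := by
    have := h.rule (t - (v + 1)) (t - (j + 1)) (by omega) (by omega)
    rwa [show t - (v + 1) + 1 = t - v by omega, show t - (j + 1) + 1 = t - j by omega] at this

-- The bound is clear for row `u`, which starts at `G u u = 0`; slide it up to row `0`.
theorem GrowthTriangle.suffix_le_pSum (h : GrowthTriangle t G) {u : ℕ} (hu : u ≤ t) (k : ℕ) :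
    (∑ j, G 0 t j - pSum (G 0 t) k) - (∑ j, G 0 u j - pSum (G 0 u) k) ≤ pSum (G u t) (r - k) := by
  suffices hrow : ∀ j ≤ u, ChainBound ((r - k : ℕ) : ℤ) (G j) u t (pSum (G u t) (r - k)) from
    (hrow 0 (Nat.zero_le u)).suffix_le hu
  intro j hj
  induction hj using Nat.decreasingInduction with
  | self => exact chainBound_pSum hu _ (fun v huv hvt => h.antitone _ _ huv hvt) (h.diag u hu)
  | of_succ j hj ih =>
    exact ih.slide hu (fun v _ hvt => h.antitone _ _ (by omega) hvt)
      (fun v _ hvt => h.antitone _ _ (by omega) hvt) (h.boxStep_up j u hj hu)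
      fun v _ hvt => h.growthCell (by omega) hvt

-- The two bounds are `suffix_le_pSum` for the triangle and for its reflection; its case `k = 0`,
-- for the triangle and its dual, pins down the total sums.
theorem GrowthTriangle.right_eq_add_revNeg_top (h : GrowthTriangle t G) {m : ℤ}
    (hm : G 0 t = Function.const _ m) {u : ℕ} (hu : u ≤ t) :
    G u t = Function.const _ m + FT.revNeg (G 0 u) := by
  have htop : ∑ j, G 0 t j = r * m := by rw [← pSum_top, hm, pSum_const _ le_rfl]
  have hsum : ∑ j, G u t j = r * m - ∑ j, G 0 u j := by
    have hle := h.suffix_le_pSum hu 0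
    have hge := h.revNeg.suffix_le_pSum hu 0
    simp only [Nat.sub_zero, pSum_zero, pSum_top, sum_revNeg, htop] at hle hge
    linarith
  refine pSum_ext fun i hi => ?_
  obtain ⟨k, hk, rfl⟩ : ∃ k ≤ r, i = r - k := ⟨r - i, by omega, by omega⟩
  have hge := h.suffix_le_pSum hu k
  have hle := h.reflect.suffix_le_pSum (Nat.sub_le t u) (r - k)
  simp only [Nat.sub_zero, Nat.sub_self, Nat.sub_sub_self hu, Nat.sub_sub_self hk] at hle
  rw [htop, hm, pSum_const _ (by omega)] at hge hle
  rw [hsum] at hle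
  rw [pSum_add, pSum_revNeg _ hk, pSum_const _ (by omega)]
  push_cast [Nat.cast_sub hk] at hge hle ⊢
  linarith

end GrowthTriangle

/-! ### Promotion of oscillating tableaux -/

section Promotion

variable {r t : ℕ} {S : ℕ → GP r}

theorem BKseg_one_zero (m : ℕ) (S : ℕ → GP r) : BKseg 1 m S 0 = S 0 := by
  induction m with
  | zero => rfl
  | succ m ih => rwa [BKseg, Function.comp_apply, BK, if_neg (by omega)]

theorem BKseg_one_of_lt {m k : ℕ} (hmk : m < k) (S : ℕ → GP r) : BKseg 1 m S k = S k := by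
  induction m with
  | zero => rfl
  | succ m ih => rw [BKseg, Function.comp_apply, BK, if_neg (by omega), ih (by omega)]

theorem BKseg_one_succ {m k : ℕ} (hkm : k < m) (S : ℕ → GP r) :
    BKseg 1 m S (k + 1) = localRule (BKseg 1 m S k) (S (k + 1)) (S (k + 2)) := by
  induction m with
  | zero => omega
  | succ m ih =>
    rw [BKseg, Function.comp_apply, BK, BK, if_neg (by omega : k ≠ 1 + m)]
    split_ifs with hk
    · obtain rfl : k = m := by omega
      rw [Nat.add_comm 1 k, Nat.add_sub_cancel, BKseg_one_of_lt k.lt_succ_self,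
        BKseg_one_of_lt (by omega : k < k + 1 + 1), localRule]
    · exact ih (by omega)

theorem promo_zero (t : ℕ) (S : ℕ → GP r) : promo t S 0 = S 0 := BKseg_one_zero _ S

theorem promo_of_le {k : ℕ} (htk : t ≤ k) (S : ℕ → GP r) : promo t S k = S k := by
  rcases k.eq_zero_or_pos with rfl | hk
  · exact promo_zero t S
  · exact BKseg_one_of_lt (by omega) S

theorem promo_succ {k : ℕ} (hkt : k + 1 < t) (S : ℕ → GP r) :
    promo t S (k + 1) = localRule (promo t S k) (S (k + 1)) (S (k + 2)) :=
  BKseg_one_succ (by omega) S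

theorem promo_congr_of_lt {t' k : ℕ} {S' : ℕ → GP r} (hS : ∀ j ≤ k + 1, S j = S' j)
    (hk : k < t) (hk' : k < t') : promo t S k = promo t' S' k := by
  induction k with
  | zero => rw [promo_zero, promo_zero, hS 0 zero_le_one]
  | succ k ih =>
    rw [promo_succ hk, promo_succ hk', ih (fun j hj => hS j (by omega)) (by omega) (by omega),
      hS _ (by omega), hS _ (by omega)]

theorem promo_congr {S' : ℕ → GP r} (h : ∀ k ≤ t, S k = S' k) {k : ℕ} (hk : k ≤ t) :
    promo t S k = promo t S' k := by
  rcases hk.lt_or_eq with hlt | heq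
  · exact promo_congr_of_lt (fun j hj => h j (by omega)) hlt hlt
  · rw [promo_of_le heq.ge, promo_of_le heq.ge, h k hk]

theorem PE_succ (t : ℕ) (S : ℕ → GP r) (u : ℕ) : PE t S (u + 1) = promo t (PE t S u) :=
  Function.iterate_succ_apply' _ _ _

theorem PE_PE (t : ℕ) (S : ℕ → GP r) (u w : ℕ) : PE t (PE t S u) w = PE t S (w + u) :=
  (Function.iterate_add_apply _ _ _ _).symm

theorem PE_congr {S' : ℕ → GP r} (h : ∀ k ≤ t, S k = S' k) (u : ℕ) {k : ℕ} (hk : k ≤ t) :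
    PE t S u k = PE t S' u k := by
  induction u generalizing k with
  | zero => exact h k hk
  | succ u ih =>
    rw [PE_succ, PE_succ]
    exact promo_congr (fun _ => ih) hk

theorem PE_congr_length {t' k u : ℕ} (hk : k + u ≤ t) (hk' : k + u ≤ t') (S : ℕ → GP r) :
    PE t S u k = PE t' S u k := by
  induction u generalizing k with
  | zero => rfl
  | succ u ih =>
    rw [PE_succ, PE_succ]
    exact promo_congr_of_lt (fun j _ => ih (by omega) (by omega)) (by omega) (by omega)

theorem PE_last (t : ℕ) (S : ℕ → GP r) (u : ℕ) : PE t S u t = S t := by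
  induction u with
  | zero => rfl
  | succ u ih => rw [PE_succ, promo_of_le le_rfl, ih]

theorem PE_rule (S : ℕ → GP r) (u : ℕ) {k : ℕ} (hk : k + 1 < t) :
    PE t S (u + 1) (k + 1) =
      localRule (PE t S (u + 1) k) (PE t S u (k + 1)) (PE t S u (k + 2)) := by
  rw [PE_succ, promo_succ hk]

/-- Fluctuating tableaux of length `t` and oscillating type. -/
structure Oscillating (t : ℕ) (S : ℕ → GP r) : Prop where
  zero : S 0 = 0
  antitone : ∀ k ≤ t, Antitone (S k)
  boxStep : ∀ k < t, BoxStep (S k) (S (k + 1))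

theorem Oscillating.antitone_promo (h : Oscillating t S) {k : ℕ} (hk : k ≤ t) :
    Antitone (promo t S k) := by
  rcases k with - | k
  · rw [promo_zero]; exact h.antitone 0 hk
  rcases hk.lt_or_eq with hlt | heq
  · rw [promo_succ hlt]; exact localRule_antitone _ _ _
  · rw [promo_of_le heq.ge]; exact h.antitone _ hk

theorem Oscillating.boxStep_promo_left (h : Oscillating t S) {k : ℕ} (hk : k < t) :
    BoxStep (promo t S k) (S (k + 1)) := by
  induction k with
  | zero => rw [promo_zero]; exact h.boxStep 0 hk
  | succ k ih =>
    rw [promo_succ hk]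
    exact (localRule_cell (h.antitone_promo (by omega)) (h.antitone _ hk) (ih (by omega))
      (h.boxStep _ hk)).2.boxStep

theorem Oscillating.promo (h : Oscillating t S) : Oscillating t (promo t S) where
  zero := by rw [promo_zero, h.zero]
  antitone _ := h.antitone_promo
  boxStep k hk := by
    have hleft := h.boxStep_promo_left hk
    rcases (Nat.succ_le_of_lt hk).lt_or_eq with hlt | heq
    · rw [promo_succ hlt]
      exact (localRule_cell (h.antitone_promo hk.le) (h.antitone _ hlt) hleft (h.boxStep _ hlt)).1
    · rwa [promo_of_le heq.ge]

theorem Oscillating.PE (h : Oscillating t S) (u : ℕ) : Oscillating t (PE t S u) := by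
  induction u with
  | zero => exact h
  | succ u ih => rw [PE_succ]; exact ih.promo

theorem Oscillating.boxStep_PE (h : Oscillating t S) (u : ℕ) {k : ℕ} (hk : k < t) :
    BoxStep (FT.PE t S (u + 1) k) (FT.PE t S u (k + 1)) := by
  rw [PE_succ]
  exact (h.PE u).boxStep_promo_left hk

theorem Oscillating.growthCell_PE (h : Oscillating t S) (u : ℕ) {k : ℕ} (hk : k + 1 < t) :
    GrowthCell (FT.PE t S (u + 1) k) (FT.PE t S u (k + 1)) (FT.PE t S (u + 1) (k + 1))
      (FT.PE t S u (k + 2)) := by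
  rw [PE_rule S u hk]
  exact (localRule_cell ((h.PE _).antitone _ (by omega)) ((h.PE _).antitone _ (by omega))
    (h.boxStep_PE u (by omega)) ((h.PE _).boxStep _ (by omega))).2

theorem Oscillating.PE_rule_symm (h : Oscillating t S) (u : ℕ) {k : ℕ} (hk : k + 1 < t) :
    FT.PE t S u (k + 1) =
      localRule (FT.PE t S (u + 1) k) (FT.PE t S (u + 1) (k + 1)) (FT.PE t S u (k + 2)) :=
  ((h.growthCell_PE u hk).localRule_eq ((h.PE u).antitone _ (by omega))).symm

theorem Oscillating.growthTriangle (h : Oscillating t S) (U : ℕ) :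
    GrowthTriangle t fun j v => FT.PE t S (U + j) (v - j) where
  diag j _ := by rw [Nat.sub_self]; exact (h.PE _).zero
  antitone j v _ _ := (h.PE _).antitone _ (by omega)
  boxStep_right j v _ _ := by
    have := (h.PE (U + j)).boxStep (v - j) (by omega)
    rwa [show v - j + 1 = v + 1 - j by omega] at this
  boxStep_up j v _ _ := by
    have := h.boxStep_PE (U + j) (k := v - (j + 1)) (by omega)
    rwa [show v - (j + 1) + 1 = v - j by omega] at this
  rule j v _ _ := by
    rw [Nat.add_sub_add_right]
    have := PE_rule S (U + j) (k := v - (j + 1)) (t := t) (by omega)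
    rwa [show v - (j + 1) + 1 = v - j by omega, show v - (j + 1) + 2 = v + 1 - j by omega] at this
  rule_symm j v _ _ := by
    rw [Nat.add_sub_add_right]
    have := h.PE_rule_symm (U + j) (k := v - (j + 1)) (by omega)
    rwa [show v - (j + 1) + 1 = v - j by omega, show v - (j + 1) + 2 = v + 1 - j by omega] at this

/-- Oscillating tableaux of length `t` whose final shape is the rectangle with `r` rows of
length `m`. -/
structure RectOscillating (t : ℕ) (m : ℤ) (S : ℕ → GP r) : Prop extends Oscillating t S where
  last : S t = Function.const _ m

variable {m : ℤ}

theorem RectOscillating.PE_dual (h : RectOscillating t m S) (U : ℕ) {u : ℕ} (hu : u ≤ t) :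
    PE t S (U + u) (t - u) = Function.const _ m + revNeg (PE t S U u) := by
  simpa using (h.growthTriangle U).right_eq_add_revNeg_top (by simp [PE_last, h.last]) hu

theorem RectOscillating.PE_periodic (h : RectOscillating t m S) {k : ℕ} (hk : k ≤ t) :
    Function.Periodic (fun u => PE t S u k) t := by
  intro u
  change PE t S (u + t) k = PE t S u k
  have hdual := h.PE_dual (u + k) (Nat.sub_le t k)
  rw [h.PE_dual u hk, Nat.sub_sub_self hk, Nat.add_assoc, Nat.add_sub_cancel' hk] at hdual
  rw [hdual, revNeg_add, revNeg_revNeg, ← add_assoc]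
  ext i
  simp [revNeg]

theorem RectOscillating.PE_modEq (h : RectOscillating t m S) {u u' k : ℕ} (hk : k ≤ t)
    (hu : u ≡ u' [MOD t]) : PE t S u k = PE t S u' k := by
  rw [← (h.PE_periodic hk).map_mod_nat u, hu, (h.PE_periodic hk).map_mod_nat]

theorem RectOscillating.congr {S' : ℕ → GP r} (h : RectOscillating t m S)
    (hS : ∀ k ≤ t, S k = S' k) : RectOscillating t m S' where
  zero := by rw [← hS 0 t.zero_le, h.zero]
  antitone k hk := by rw [← hS k hk]; exact h.antitone k hk
  boxStep k hk := by rw [← hS k hk.le, ← hS (k + 1) hk]; exact h.boxStep k hk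
  last := by rw [← hS t le_rfl, h.last]

theorem RectOscillating.PE (h : RectOscillating t m S) (u : ℕ) :
    RectOscillating t m (FT.PE t S u) :=
  ⟨h.toOscillating.PE u, (PE_last t S u).trans h.last⟩

end Promotion

/-! ### Promotion functions -/

section Crossing

variable {r i : ℕ} {κ lam μ ν : GP r}

/-- The boundary below row `i` is crossed (value `1`) in a growth diagram cell when the boxes of
the parallel sides `κ → lam` and `μ → ν` lie on different sides of it. Prefix sums detect this, in
a form symmetric under exchanging `lam` and `μ`. -/
def crossing (i : ℕ) (κ lam μ ν : GP r) : ℤ :=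
  pSum lam i - pSum κ i - (pSum ν i - pSum μ i)

theorem crossing_swap (i : ℕ) (κ lam μ ν : GP r) : crossing i κ μ lam ν = crossing i κ lam μ ν := by
  unfold crossing
  ring

theorem pSum_eV (a : Fin r) (i : ℕ) : pSum (eV a) i = if (a : ℕ) < i then 1 else 0 := by
  simp [pSum, eV]

theorem GrowthCell.crossing_eq_zero_or_one (h : GrowthCell κ lam μ ν) (i : ℕ) :
    crossing i κ lam μ ν = 0 ∨ crossing i κ lam μ ν = 1 := by
  rcases h with ⟨a, b, hab, -, rfl, rfl⟩ | ⟨a, b, hab, -, rfl, rfl⟩ <;>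
  · simp only [crossing, pSum_add, pSum_eV]
    have : (a : ℕ) ≤ b ∨ (b : ℕ) ≤ a := by omega
    split_ifs <;> omega

theorem GrowthCell.exists_row_iff_crossing (h : GrowthCell κ lam μ ν) :
    (∃ a b : Fin r, (lam = κ + eV a ∧ ν = μ + eV b ∧ (a : ℕ) < i ∧ i ≤ (b : ℕ)) ∨
      (κ = lam + eV a ∧ μ = ν + eV b ∧ (b : ℕ) < i ∧ i ≤ (a : ℕ))) ↔
      crossing i κ lam μ ν = 1 := by
  constructor
  · rintro ⟨a, b, ⟨rfl, rfl, ha, hb⟩ | ⟨rfl, rfl, hb, ha⟩⟩ <;>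
    simp [crossing, pSum_add, pSum_eV, ha, hb, ha.not_gt, hb.not_gt]
  · intro hone
    rcases h with ⟨a, b, -, -, hlam, hν⟩ | ⟨a, b, -, -, hκ, hμ⟩
    · refine ⟨a, b, Or.inl ⟨hlam, hν, ?_⟩⟩
      simp only [crossing, hlam, hν, pSum_add, pSum_eV] at hone
      split_ifs at hone <;> omega
    · refine ⟨a, b, Or.inr ⟨hκ, hμ, ?_⟩⟩
      simp only [crossing, hκ, hμ, pSum_add, pSum_eV] at hone
      split_ifs at hone <;> omega

theorem GrowthCell.crossing_dual (h : GrowthCell κ lam μ ν) (m : ℤ) (hi : i ≤ r) :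
    crossing (r - i) (Function.const _ m + FT.revNeg ν) (Function.const _ m + FT.revNeg lam)
      (Function.const _ m + FT.revNeg μ) (Function.const _ m + FT.revNeg κ) =
      crossing i κ lam μ ν := by
  simp only [crossing, pSum_add, pSum_revNeg _ hi]
  linarith [h.sum_sub_sum]

theorem pSum_add_pSum_revNeg_of_boxStep_zero {v : GP r} (hv : Antitone v) (hstep : BoxStep 0 v)
    (h0 : 0 < i) (hir : i < r) : pSum v i + pSum (revNeg v) i = 1 := by
  have hadd : ∀ a : Fin r, Antitone (eV a) → pSum (eV a) i + pSum (revNeg (eV a)) i = 1 := by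
    intro a ha
    have ha0 : (a : ℕ) = 0 := by
      by_contra hne
      have hanti := ha (show (⟨0, by omega⟩ : Fin r) ≤ a from Nat.zero_le _)
      rw [eV_self, eV_of_ne (Fin.ne_of_val_ne (Ne.symm hne))] at hanti
      omega
    have hrev := pSum_revNeg (eV a) (k := r - i) (by omega)
    rw [Nat.sub_sub_self hir.le, ← pSum_top, pSum_eV, pSum_eV, if_pos (by omega),
      if_pos a.isLt] at hrev
    rw [hrev, pSum_eV, if_pos (by omega)]
    norm_num
  obtain ⟨a, ha | ha⟩ := hstep
  · rw [zero_add] at ha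
    exact ha ▸ hadd a (ha ▸ hv)
  · have hrev : revNeg v = eV a.rev := by
      rw [eq_add_eV_iff_revNeg, revNeg_zero, zero_add] at ha
      exact ha
    have := hadd a.rev (hrev ▸ revNeg_antitone hv)
    rw [← hrev, revNeg_revNeg] at this
    rw [add_comm, this]

end Crossing

section DiagramCrossing

variable {r t i : ℕ} {m : ℤ} {S : ℕ → GP r}

/-- The crossing of the cell in row `u + 1` and column `u + k + 2` (1-indexed) of the growth diagram
of `S`. -/
def diagramCrossing (t : ℕ) (S : ℕ → GP r) (i u k : ℕ) : ℤ :=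
  crossing i (PE t S (u + 1) k) (PE t S u (k + 1)) (PE t S (u + 1) (k + 1)) (PE t S u (k + 2))

theorem Oscillating.recorded_iff (h : Oscillating t S) {u k : ℕ} (hk : k + 1 < t) :
    recorded r t S i (u + 1) (u + k + 2) ↔ diagramCrossing t S i u k = 1 := by
  rw [diagramCrossing, ← (h.growthCell_PE u hk).exists_row_iff_crossing, recorded,
    show u + k + 2 - (u + 1) = k + 1 by omega, Nat.add_sub_cancel, Nat.add_sub_cancel]

theorem diagramCrossing_congr {S' : ℕ → GP r} (h : ∀ k ≤ t, S k = S' k) (u : ℕ) {k : ℕ}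
    (hk : k + 1 < t) : diagramCrossing t S i u k = diagramCrossing t S' i u k := by
  simp only [diagramCrossing, PE_congr h _ (by omega : k ≤ t), PE_congr h _ (by omega : k + 1 ≤ t),
    PE_congr h _ (by omega : k + 2 ≤ t)]

theorem diagramCrossing_PE (t : ℕ) (S : ℕ → GP r) (i u k s : ℕ) :
    diagramCrossing t (PE t S s) i u k = diagramCrossing t S i (u + s) k := by
  simp only [diagramCrossing, PE_PE, Nat.add_right_comm u 1 s]

theorem RectOscillating.diagramCrossing_modEq (h : RectOscillating t m S) {u u' k : ℕ}
    (hk : k + 1 < t) (hu : u ≡ u' [MOD t]) :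
    diagramCrossing t S i u k = diagramCrossing t S i u' k := by
  simp only [diagramCrossing, h.PE_modEq (by omega : k ≤ t) (hu.add_right 1),
    h.PE_modEq (by omega : k + 1 ≤ t) (hu.add_right 1), h.PE_modEq (by omega : k + 1 ≤ t) hu,
    h.PE_modEq (by omega : k + 2 ≤ t) hu]

theorem RectOscillating.diagramCrossing_dual (h : RectOscillating t m S) {u k : ℕ}
    (hk : k + 1 < t) (hi : i ≤ r) :
    diagramCrossing t S (r - i) (u + k + 1) (t - (k + 2)) = diagramCrossing t S i u k := by
  have hκ := h.PE_dual (u + 1) (by omega : k ≤ t)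
  have hlam := h.PE_dual u (by omega : k + 1 ≤ t)
  have hμ := h.PE_dual (u + 1) (by omega : k + 1 ≤ t)
  have hν := h.PE_dual u (by omega : k + 2 ≤ t)
  rw [show u + 1 + k = u + k + 1 by omega, show t - k = t - (k + 2) + 2 by omega] at hκ
  rw [show u + (k + 1) = u + k + 1 by omega, show t - (k + 1) = t - (k + 2) + 1 by omega] at hlam
  rw [show u + 1 + (k + 1) = u + k + 1 + 1 by omega,
    show t - (k + 1) = t - (k + 2) + 1 by omega] at hμ
  rw [show u + (k + 2) = u + k + 1 + 1 by omega] at hν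
  rw [diagramCrossing, hκ, hlam, hμ, hν, (h.growthCell_PE u hk).crossing_dual m hi,
    diagramCrossing]

theorem RectOscillating.sum_diagramCrossing (h : RectOscillating t m S) (ht : 0 < t) (h0 : 0 < i)
    (hir : i < r) (u : ℕ) : ∑ k ∈ Finset.range (t - 1), diagramCrossing t S i u k = 1 := by
  have hfirst : BoxStep 0 (FT.PE t S u 1) := by
    have := (h.PE u).boxStep 0 ht
    rwa [(h.PE u).zero] at this
  have hstart : pSum (FT.PE t S (u + 1) 0) i = 0 := by rw [(h.PE _).zero]; simp [pSum]
  have hend : pSum (FT.PE t S u t) i - pSum (FT.PE t S (u + 1) (t - 1)) i =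
      -pSum (revNeg (FT.PE t S u 1)) i := by
    rw [h.PE_dual u (Nat.one_le_of_lt ht), PE_last, h.last, pSum_add]
    ring
  calc ∑ k ∈ Finset.range (t - 1), diagramCrossing t S i u k
      = pSum (FT.PE t S u 1) i - pSum (FT.PE t S (u + 1) 0) i -
          (pSum (FT.PE t S u (t - 1 + 1)) i - pSum (FT.PE t S (u + 1) (t - 1)) i) :=
        Finset.sum_range_sub'
          (fun k => pSum (FT.PE t S u (k + 1)) i - pSum (FT.PE t S (u + 1) k) i) _
    _ = pSum (FT.PE t S u 1) i + pSum (revNeg (FT.PE t S u 1)) i := by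
        rw [Nat.sub_add_cancel ht, hend, hstart]
        ring
    _ = 1 := pSum_add_pSum_revNeg_of_boxStep_zero ((h.PE u).antitone 1 ht) hfirst h0 hir

theorem existsUnique_eq_one_of_sum_eq_one {n : ℕ} {f : ℕ → ℤ} (h01 : ∀ k < n, f k = 0 ∨ f k = 1)
    (hsum : ∑ k ∈ Finset.range n, f k = 1) : ∃! k, k < n ∧ f k = 1 := by
  have hf : ∀ k ∈ Finset.range n, f k = if f k = 1 then 1 else 0 := by
    intro k hk
    rcases h01 k (Finset.mem_range.mp hk) with h | h <;> simp [h]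
  rw [Finset.sum_congr rfl hf, Finset.sum_boole, Nat.cast_eq_one, Finset.card_eq_one] at hsum
  obtain ⟨k, hk⟩ := hsum
  simp only [Finset.ext_iff, Finset.mem_filter, Finset.mem_range, Finset.mem_singleton] at hk
  exact ⟨k, (hk k).mpr rfl, fun l hl => (hk l).mp hl⟩

theorem RectOscillating.existsUnique_diagramCrossing (h : RectOscillating t m S) (ht : 0 < t)
    (h0 : 0 < i) (hir : i < r) (u : ℕ) : ∃! k, k < t - 1 ∧ diagramCrossing t S i u k = 1 :=
  existsUnique_eq_one_of_sum_eq_one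
    (fun _ _ => (h.growthCell_PE u (by omega)).crossing_eq_zero_or_one i)
    (h.sum_diagramCrossing ht h0 hir u)

end DiagramCrossing

section Evacuated

variable {r t : ℕ} {m : ℤ} {S : ℕ → GP r}

/-- The dual path `k ↦ m - rev (S (t - k))`, which runs down the right edge of the growth diagram of
`S` and turns out to be the evacuation of `S`. -/
def dualPath (t : ℕ) (m : ℤ) (S : ℕ → GP r) : ℕ → GP r :=
  fun k => Function.const _ m + revNeg (S (t - k))

theorem BoxStep.add_left {α β : GP r} (h : BoxStep α β) (γ : GP r) : BoxStep (γ + α) (γ + β) := by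
  obtain ⟨x, rfl | rfl⟩ := h
  exacts [⟨x, Or.inl (add_assoc _ _ _).symm⟩, ⟨x, Or.inr (add_assoc _ _ _).symm⟩]

theorem RectOscillating.dualPath_eq_PE (h : RectOscillating t m S) {k : ℕ} (hk : k ≤ t) :
    dualPath t m S k = FT.PE t S (t - k) k := by
  have := h.PE_dual 0 (Nat.sub_le t k)
  rwa [Nat.sub_sub_self hk, Nat.zero_add, eq_comm] at this

theorem RectOscillating.dualPath (h : RectOscillating t m S) :
    RectOscillating t m (dualPath t m S) where
  zero := by
    rw [h.dualPath_eq_PE (Nat.zero_le t)]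
    exact (h.PE _).zero
  antitone k _ := (revNeg_antitone (h.antitone (t - k) (Nat.sub_le _ _))).const_add m
  boxStep k hk := by
    have hstep := (h.boxStep (t - (k + 1)) (by omega)).symm.revNeg
    rw [show t - (k + 1) + 1 = t - k by omega] at hstep
    exact hstep.add_left _
  last := by rw [FT.dualPath, Nat.sub_self, h.zero, revNeg_zero, add_zero]

theorem RectOscillating.PE_dualPath (h : RectOscillating t m S) {u w k : ℕ} (hk : k ≤ t)
    (huw : t ∣ w + u + k) : FT.PE t (FT.dualPath t m S) u k = FT.PE t S w k := by
  induction u generalizing w k with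
  | zero =>
    refine (h.dualPath_eq_PE hk).trans (h.PE_modEq hk (Nat.ModEq.add_right_cancel' k ?_))
    rw [Nat.sub_add_cancel hk]
    exact (Nat.modEq_zero_iff_dvd.mpr dvd_rfl).trans (Nat.modEq_zero_iff_dvd.mpr huw).symm
  | succ u ihu =>
    induction k generalizing w with
    | zero => rw [(h.dualPath.PE _).zero, (h.PE _).zero]
    | succ k ihk =>
      rcases hk.lt_or_eq with hlt | heq
      · rw [PE_rule _ _ hlt, h.PE_rule_symm w hlt,
          ihk (w := w + 1) (by omega) (by convert huw using 1; omega),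
          ihu (w := w + 1) hk (by convert huw using 1; omega),
          ihu (w := w) hlt (by convert huw using 1; omega)]
      · rw [heq, PE_last, PE_last, h.last, h.dualPath.last]

theorem RectOscillating.diagramCrossing_dualPath (h : RectOscillating t m S) {i u w k : ℕ}
    (hk : k + 1 < t) (huw : t ∣ w + u + k + 2) :
    diagramCrossing t (FT.dualPath t m S) i u k = diagramCrossing t S i w k := by
  have hκ := h.PE_dualPath (u := u + 1) (w := w + 1) (by omega : k ≤ t)
    (by convert huw using 1; omega)
  have hlam := h.PE_dualPath (u := u) (w := w + 1) (by omega : k + 1 ≤ t)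
    (by convert huw using 1; omega)
  have hμ := h.PE_dualPath (u := u + 1) (w := w) (by omega : k + 1 ≤ t)
    (by convert huw using 1; omega)
  have hν := h.PE_dualPath (u := u) (w := w) hk huw
  rw [diagramCrossing, hκ, hlam, hμ, hν, crossing_swap, diagramCrossing]

end Evacuated

section CyclicProm

variable {r t i : ℕ} {m : ℤ} {S : ℕ → GP r}

/-- The graph of the promotion function `prom_i` of an oscillating tableau `S` of length `t`, with
the index set `{1,…,t}` viewed as `ZMod t`. -/
def cyclicProm (t : ℕ) (S : ℕ → GP r) (i : ℕ) (x y : ZMod t) : Prop :=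
  if i = 0 ∨ i = r then x = y
  else ∃ u k, k + 1 < t ∧ (u + 1 : ℕ) = x ∧ (u + k + 2 : ℕ) = y ∧ diagramCrossing t S i u k = 1

theorem cyclicProm_congr {S' : ℕ → GP r} (h : ∀ k ≤ t, S k = S' k) (i : ℕ) (x y : ZMod t) :
    cyclicProm t S i x y ↔ cyclicProm t S' i x y := by
  unfold cyclicProm
  refine iff_of_eq (if_congr Iff.rfl rfl (propext <| exists_congr fun u => exists_congr fun k =>
    and_congr_right fun hk => ?_))
  rw [diagramCrossing_congr h u hk]

theorem RectOscillating.cyclicProm_dual (h : RectOscillating t m S) (hi : i ≤ r) (x y : ZMod t) :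
    cyclicProm t S i x y ↔ cyclicProm t S (r - i) y x := by
  by_cases h0 : i = 0 ∨ i = r
  · rw [cyclicProm, if_pos h0, cyclicProm, if_pos (by omega), eq_comm]
  have himp : ∀ i ≤ r, ¬(i = 0 ∨ i = r) → ∀ x y : ZMod t,
      cyclicProm t S i x y → cyclicProm t S (r - i) y x := by
    intro i hi h0 x y hxy
    rw [cyclicProm, if_neg h0] at hxy
    rw [cyclicProm, if_neg (by omega)]
    obtain ⟨u, k, hk, rfl, rfl, hone⟩ := hxy
    refine ⟨u + k + 1, t - (k + 2), by omega, rfl, ?_, by rw [h.diagramCrossing_dual hk hi, hone]⟩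
    rw [show u + k + 1 + (t - (k + 2)) + 2 = u + 1 + t by omega]
    push_cast
    rw [ZMod.natCast_self, add_zero]
  refine ⟨himp i hi h0 x y, fun hyx => ?_⟩
  simpa [Nat.sub_sub_self hi] using himp (r - i) (by omega) (by omega) y x hyx

theorem RectOscillating.cyclicProm_natCast_succ_iff (h : RectOscillating t m S)
    (h0 : ¬(i = 0 ∨ i = r)) (u : ℕ) (y : ZMod t) :
    cyclicProm t S i (u + 1 : ℕ) y ↔
      ∃ k, k + 1 < t ∧ (u + k + 2 : ℕ) = y ∧ diagramCrossing t S i u k = 1 := by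
  rw [cyclicProm, if_neg h0]
  refine ⟨?_, fun ⟨k, hk, hy, hone⟩ => ⟨u, k, hk, rfl, hy, hone⟩⟩
  rintro ⟨u', k, hk, hu, hy, hone⟩
  have hmod : u' ≡ u [MOD t] :=
    Nat.ModEq.add_right_cancel' 1 ((ZMod.natCast_eq_natCast_iff _ _ _).mp hu)
  refine ⟨k, hk, ?_, by rw [← h.diagramCrossing_modEq hk hmod, hone]⟩
  rw [← hy]
  exact (ZMod.natCast_eq_natCast_iff _ _ _).mpr ((hmod.symm.add_right k).add_right 2)

theorem natCast_injOn_Ico (a : ℕ) : Set.InjOn (Nat.cast : ℕ → ZMod t) (Set.Ico a (a + t)) :=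
  fun _ hu _ hv huv => Nat.mod_injOn_Ico a t (Finset.mem_coe.mpr (Finset.mem_Ico.mpr hu))
    (Finset.mem_coe.mpr (Finset.mem_Ico.mpr hv)) ((ZMod.natCast_eq_natCast_iff _ _ _).mp huv)

theorem RectOscillating.promRel_iff {n : ℕ} {T : ℕ → GP r} (h : RectOscillating t m (stdT n T))
    (hi : i ≤ r) {u v : ℕ} (hu₁ : 1 ≤ u) (hut : u ≤ t) (hv₁ : 1 ≤ v) (hvt : v ≤ t) :
    promRel r n t T i u v ↔ cyclicProm t (stdT n T) i u v := by
  by_cases h0 : i = 0 ∨ i = r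
  · rw [promRel, if_pos h0, cyclicProm, if_pos h0,
      (natCast_injOn_Ico 1).eq_iff ⟨hu₁, by omega⟩ ⟨hv₁, by omega⟩]
    exact ⟨fun huv => huv.2.2, fun huv => ⟨hu₁, hut, huv⟩⟩
  obtain ⟨u, rfl⟩ := Nat.exists_eq_add_of_le' hu₁
  rw [promRel, if_neg h0, h.cyclicProm_natCast_succ_iff h0, PMmem]
  set v' := if u + 1 < v then v else v + t with hv'
  have hcast : (v' : ZMod t) = v := by
    rw [hv']
    split_ifs <;> simp
  constructor
  · rintro ⟨-, -, -, -, huv, -, -, hrec⟩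
    obtain ⟨k, hk, hkt⟩ : ∃ k, v' = u + k + 2 ∧ k + 1 < t :=
      ⟨v' - (u + 2), by split_ifs at hv' <;> omega, by split_ifs at hv' <;> omega⟩
    exact ⟨k, hkt, hk ▸ hcast, (h.recorded_iff hkt).mp (hk ▸ hrec)⟩
  · rintro ⟨k, hk, hv, hone⟩
    have hkv : u + k + 2 = v' :=
      natCast_injOn_Ico (u + 2) ⟨by omega, by omega⟩
        ⟨by split_ifs at hv' <;> omega, by split_ifs at hv' <;> omega⟩ (hv.trans hcast.symm)
    refine ⟨hu₁, hut, hv₁, hvt, ?_, by omega, by omega, ?_⟩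
    · split_ifs at hv' <;> omega
    · exact hkv ▸ (h.recorded_iff hk).mpr hone

variable [NeZero t]

theorem exists_natCast_add_eq (c : ℕ) (x : ZMod t) : ∃ u : ℕ, ((u + c : ℕ) : ZMod t) = x :=
  ⟨(x - c).val, by rw [Nat.cast_add, ZMod.natCast_zmod_val, sub_add_cancel]⟩

theorem RectOscillating.cyclicProm_PE (h : RectOscillating t m S) (s : ℕ) (x y : ZMod t) :
    cyclicProm t (FT.PE t S s) i x y ↔ cyclicProm t S i (x + s) (y + s) := by
  by_cases h0 : i = 0 ∨ i = r
  · rw [cyclicProm, if_pos h0, cyclicProm, if_pos h0, add_left_inj]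
  obtain ⟨u, rfl⟩ := exists_natCast_add_eq 1 x
  rw [(h.PE s).cyclicProm_natCast_succ_iff h0, ← Nat.cast_add, Nat.add_right_comm,
    h.cyclicProm_natCast_succ_iff h0]
  refine exists_congr fun k => and_congr_right fun _ => and_congr ?_ (by rw [diagramCrossing_PE])
  rw [← add_left_inj (s : ZMod t), ← Nat.cast_add]
  ring_nf

theorem RectOscillating.cyclicProm_dualPath (h : RectOscillating t m S) (hi : i ≤ r)
    (x y : ZMod t) :
    cyclicProm t (FT.dualPath t m S) i x y ↔ cyclicProm t S (r - i) (1 - x) (1 - y) := by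
  rw [h.cyclicProm_dual (Nat.sub_le r i), Nat.sub_sub_self hi]
  by_cases h0 : i = 0 ∨ i = r
  · rw [cyclicProm, if_pos h0, cyclicProm, if_pos h0, sub_right_inj, eq_comm]
  obtain ⟨u, rfl⟩ := exists_natCast_add_eq 1 x
  obtain ⟨w, hw⟩ := exists_natCast_add_eq 1 (1 - y)
  obtain rfl : y = -(w : ZMod t) := by
    push_cast at hw
    linear_combination hw
  rw [h.dualPath.cyclicProm_natCast_succ_iff h0, ← hw, h.cyclicProm_natCast_succ_iff h0]
  refine exists_congr fun k => and_congr_right fun hk => ?_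
  have hsum : ((u + k + 2 : ℕ) : ZMod t) = -(w : ZMod t) ↔ t ∣ w + u + k + 2 := by
    rw [← ZMod.natCast_eq_zero_iff, eq_neg_iff_add_eq_zero, ← Nat.cast_add]
    ring_nf
  have hsum' : ((w + k + 2 : ℕ) : ZMod t) = 1 - ((u + 1 : ℕ) : ZMod t) ↔ t ∣ w + u + k + 2 := by
    rw [← ZMod.natCast_eq_zero_iff, ← sub_eq_zero]
    push_cast
    ring_nf
  rw [hsum, hsum']
  exact and_congr_right fun hdvd => by rw [h.diagramCrossing_dualPath hk hdvd]

theorem RectOscillating.existsUnique_cyclicProm (h : RectOscillating t m S) (hi : i ≤ r)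
    (x : ZMod t) : ∃! y, cyclicProm t S i x y := by
  by_cases h0 : i = 0 ∨ i = r
  · simp [cyclicProm, if_pos h0]
  obtain ⟨u, rfl⟩ := exists_natCast_add_eq 1 x
  obtain ⟨k, ⟨hk, hone⟩, huniq⟩ :=
    h.existsUnique_diagramCrossing (NeZero.pos t) (i := i) (by omega) (by omega) u
  simp only [h.cyclicProm_natCast_succ_iff h0]
  refine ⟨(u + k + 2 : ℕ), ⟨k, by omega, rfl, hone⟩, ?_⟩
  rintro y ⟨k', hk', rfl, hone'⟩
  rw [huniq k' ⟨by omega, hone'⟩]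

theorem RectOscillating.exists_perm_cyclicProm (h : RectOscillating t m S) (hi : i ≤ r) :
    ∃ π : Equiv.Perm (ZMod t), ∀ x y, cyclicProm t S i x y ↔ π x = y := by
  choose f hf hf_unique using fun x => h.existsUnique_cyclicProm hi x
  choose g hg hg_unique using fun x => h.existsUnique_cyclicProm (Nat.sub_le r i) x
  refine ⟨⟨f, g, fun x => ?_, fun y => ?_⟩, fun x y => ?_⟩
  · exact (hg_unique _ _ ((h.cyclicProm_dual hi _ _).mp (hf x))).symm
  · exact (hf_unique _ _ ((h.cyclicProm_dual hi _ _).mpr (hg y))).symm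
  · exact ⟨fun hxy => (hf_unique _ _ hxy).symm, fun hxy => hxy ▸ hf x⟩

end CyclicProm

/-! ### Oscillized skew columns -/

section ColumnPath

variable {r d : ℕ} {f g : ℕ → GP r} {x : ℕ → Fin r}

/-- The first `d` steps of `f` add boxes in the strictly increasing rows `x 0 < ⋯ < x (d - 1)`:
`f` is the oscillization of a skew column of added boxes. -/
structure AddsRows (d : ℕ) (x : ℕ → Fin r) (f : ℕ → GP r) : Prop where
  strictMonoOn : StrictMonoOn x (Set.Iio d)
  step : ∀ q < d, f (q + 1) = f q + eV (x q)

/-- The first `d` steps of `f` form the oscillization of a skew column. A removed column is encoded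
as the image under `revNeg` of an added one. -/
def ColumnPath (d : ℕ) (f : ℕ → GP r) : Prop :=
  (∃ x, AddsRows d x f) ∨ ∃ x, AddsRows d x fun q => revNeg (f q)

theorem AddsRows.congr (h : AddsRows d x f) (hfg : ∀ q ≤ d, f q = g q) : AddsRows d x g where
  strictMonoOn := h.strictMonoOn
  step q hq := by rw [← hfg _ hq, ← hfg _ hq.le, h.step q hq]

theorem AddsRows.add_left (h : AddsRows d x f) (w : GP r) : AddsRows d x fun q => w + f q where
  strictMonoOn := h.strictMonoOn
  step q hq := by rw [h.step q hq, add_assoc]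

theorem AddsRows.mono {d' : ℕ} (h : AddsRows d x f) (hd : d' ≤ d) : AddsRows d' x f where
  strictMonoOn := h.strictMonoOn.mono (Set.Iio_subset_Iio hd)
  step q hq := h.step q (hq.trans_le hd)

theorem AddsRows.reverse (h : AddsRows d x f) :
    AddsRows d (fun q => (x (d - 1 - q)).rev) fun q => revNeg (f (d - q)) where
  strictMonoOn q hq q' hq' hlt := by
    simp only [Set.mem_Iio] at hq hq'
    exact Fin.rev_lt_rev.mpr (h.strictMonoOn (by simp; omega) (by simp; omega) (by omega))
  step q hq := by
    rw [← eq_add_eV_iff_revNeg, show d - q = d - 1 - q + 1 by omega,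
      show d - (q + 1) = d - 1 - q by omega, h.step _ (by omega)]

theorem ColumnPath.congr (h : ColumnPath d f) (hfg : ∀ q ≤ d, f q = g q) : ColumnPath d g :=
  h.imp (fun ⟨x, hx⟩ => ⟨x, hx.congr hfg⟩)
    fun ⟨x, hx⟩ => ⟨x, hx.congr fun q hq => congrArg FT.revNeg (hfg q hq)⟩

theorem ColumnPath.mono {d' : ℕ} (h : ColumnPath d f) (hd : d' ≤ d) : ColumnPath d' f :=
  h.imp (fun ⟨x, hx⟩ => ⟨x, hx.mono hd⟩) fun ⟨x, hx⟩ => ⟨x, hx.mono hd⟩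

theorem ColumnPath.revNeg (h : ColumnPath d f) : ColumnPath d fun q => revNeg (f q) :=
  h.symm.imp id fun ⟨x, hx⟩ => ⟨x, hx.congr fun _ _ => (revNeg_revNeg _).symm⟩

theorem ColumnPath.add_left (h : ColumnPath d f) (w : GP r) : ColumnPath d fun q => w + f q :=
  h.imp (fun ⟨x, hx⟩ => ⟨x, hx.add_left w⟩)
    fun ⟨x, hx⟩ => ⟨x, (hx.add_left (FT.revNeg w)).congr fun _ _ => (revNeg_add _ _).symm⟩

theorem ColumnPath.reverse (h : ColumnPath d f) : ColumnPath d fun q => f (d - q) :=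
  h.symm.imp (fun ⟨_, hx⟩ => ⟨_, hx.reverse.congr fun _ _ => revNeg_revNeg _⟩)
    fun ⟨_, hx⟩ => ⟨_, hx.reverse⟩

theorem ColumnPath.boxStep (h : ColumnPath d f) {q : ℕ} (hq : q < d) :
    BoxStep (f q) (f (q + 1)) := by
  rcases h with ⟨x, hx⟩ | ⟨x, hx⟩
  · exact ⟨x q, Or.inl (hx.step q hq)⟩
  · exact ⟨(x q).rev, Or.inr (by rw [eq_add_eV_iff_revNeg, Fin.rev_rev]; exact hx.step q hq)⟩

theorem AddsRows.apply (h : AddsRows d x f) {q : ℕ} (hq : q ≤ d) (i : Fin r) :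
    f q i = f 0 i + if ∃ p < q, x p = i then 1 else 0 := by
  induction q with
  | zero => simp
  | succ q ih =>
    rw [h.step q hq, Pi.add_apply, ih (by omega)]
    rcases eq_or_ne i (x q) with rfl | hi
    · have hnot : ¬∃ p < q, x p = x q := fun ⟨p, hp, heq⟩ =>
        (h.strictMonoOn (Set.mem_Iio.mpr (by omega)) (Set.mem_Iio.mpr hq) hp).ne heq
      rw [if_neg hnot, if_pos ⟨q, q.lt_succ_self, rfl⟩, eV_self, add_zero]
    · have hiff : (∃ p < q + 1, x p = i) ↔ ∃ p < q, x p = i := by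
        rw [Nat.exists_lt_succ_right, or_iff_left hi.symm]
      rw [eV_of_ne hi, add_zero, if_congr hiff rfl rfl]

theorem AddsRows.apply_of_forall_lt (h : AddsRows d x f) {q : ℕ} (hq : q ≤ d) {i : Fin r}
    (hi : ∀ p < q, x p < i) : f q i = f 0 i := by
  rw [h.apply hq, if_neg (fun ⟨p, hp, heq⟩ => (hi p hp).ne heq), add_zero]

theorem AddsRows.antitone (h : AddsRows d x f) (h0 : Antitone (f 0)) (hd : Antitone (f d))
    {q : ℕ} (hq : q ≤ d) : Antitone (f q) := by
  intro i j hij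
  have h0ij := h0 hij
  have hdij := hd hij
  rw [h.apply le_rfl, h.apply le_rfl] at hdij
  rw [h.apply hq, h.apply hq]
  by_cases hj : ∃ p < q, x p = j
  · have hi : (∃ p < d, x p = i) → ∃ p < q, x p = i := by
      obtain ⟨p, hp, rfl⟩ := hj
      rintro ⟨p', hp', rfl⟩
      refine ⟨p', (h.strictMonoOn.le_iff_le ?_ ?_).mp hij |>.trans_lt hp, rfl⟩ <;>
        exact Set.mem_Iio.mpr (by omega)
    rw [if_pos (hj.imp fun p hp => ⟨hp.1.trans_le hq, hp.2⟩)] at hdij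
    rw [if_pos hj]
    split_ifs at hdij ⊢ <;> grind
  · rw [if_neg hj]
    split_ifs <;> omega

theorem ColumnPath.antitone (h : ColumnPath d f) (h0 : Antitone (f 0)) (hd : Antitone (f d))
    {q : ℕ} (hq : q ≤ d) : Antitone (f q) := by
  rcases h with ⟨x, hx⟩ | ⟨x, hx⟩
  · exact hx.antitone h0 hd hq
  · rw [← revNeg_revNeg (f q)]
    exact revNeg_antitone (hx.antitone (revNeg_antitone h0) (revNeg_antitone hd) hq)

theorem AddsRows.exists_of_localRule (h : AddsRows d x f) (hg0 : Antitone (g 0))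
    (hg : ∀ q < d, g (q + 1) = localRule (g q) (f q) (f (q + 1))) :
    ∃ y, AddsRows d y g ∧ ∀ q < d, y q ≤ x q ∧ g q (y q) = g q (x q) := by
  have hanti (q : ℕ) (hq : q ≤ d) : Antitone (g q) := by
    rcases q with - | q
    · exact hg0
    · rw [hg q hq]; exact localRule_antitone _ _ _
  have hstep (q : ℕ) : ∃ y, q < d → g (q + 1) = g q + eV y ∧ y ≤ x q ∧ g q y = g q (x q) := by
    by_cases hq : q < d
    · obtain ⟨y, hyx, hgy, hsort⟩ := exists_sortDesc_add_eV (hanti q hq.le) (x q)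
      refine ⟨y, fun _ => ⟨?_, hyx, hgy⟩⟩
      rw [hg q hq, h.step q hq, ← hsort, localRule]
      congr 1
      abel
    · exact ⟨x q, fun hq' => absurd hq' hq⟩
  choose y hy using hstep
  refine ⟨y, ⟨strictMonoOn_of_lt_add_one Set.ordConnected_Iio ?_, fun q hq => (hy q hq).1⟩,
    fun q hq => (hy q hq).2⟩
  intro q _ hq hq'
  simp only [Set.mem_Iio] at hq hq'
  by_contra! hle
  have hlt : x q < x (q + 1) := h.strictMonoOn hq hq' q.lt_succ_self
  have hyq := (hy q hq).2.1
  have hrow_next := hanti (q + 1) hq'.le hle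
  have hrow := hanti q hq.le hlt.le
  rw [(hy (q + 1) hq').2.2, (hy q hq).1, Pi.add_apply, Pi.add_apply, eV_self,
    eV_of_ne (hyq.trans_lt hlt).ne', (hy q hq).2.2] at hrow_next
  omega

theorem AddsRows.eq_localRule (h : AddsRows d x f) (hg0 : Antitone (g 0))
    (hg : ∀ q < d, g (q + 1) = localRule (g q) (f q) (f (q + 1))) {q : ℕ} (hq : q ≤ d) :
    g q = localRule (g 0) (f 0) (f q) := by
  obtain ⟨y, hy, hyx⟩ := h.exists_of_localRule hg0 hg
  induction q with
  | zero => rw [localRule, add_sub_cancel_left, sortDesc_of_antitone hg0]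
  | succ q ih =>
    have hsort : sortDesc (g q) = sortDesc (f q + g 0 - f 0) := by
      rw [ih (by omega), localRule, sortDesc_of_antitone (sortDesc_antitone _)]
    have hx (p : ℕ) (hp : p < q) : x p < x q :=
      h.strictMonoOn (Set.mem_Iio.mpr (by omega)) (Set.mem_Iio.mpr hq) hp
    have hrow : g q (x q) = (f q + g 0 - f 0) (x q) := by
      rw [hy.apply_of_forall_lt (by omega) fun p hp => (hyx p (by omega)).1.trans_lt (hx p hp),
        Pi.sub_apply, Pi.add_apply, h.apply_of_forall_lt (by omega) hx]
      ring
    rw [hg q hq, localRule, localRule, h.step q hq]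
    convert sortDesc_add_eV_congr hsort hrow using 2 <;> abel

theorem ColumnPath.of_localRule (h : ColumnPath d f) (hg0 : Antitone (g 0))
    (hg : ∀ q < d, g (q + 1) = localRule (g q) (f q) (f (q + 1))) :
    ColumnPath d g ∧ g d = localRule (g 0) (f 0) (f d) := by
  rcases h with ⟨x, hx⟩ | ⟨x, hx⟩
  · obtain ⟨y, hy, -⟩ := hx.exists_of_localRule hg0 hg
    exact ⟨Or.inl ⟨y, hy⟩, hx.eq_localRule hg0 hg le_rfl⟩
  · have hg' (q : ℕ) (hq : q < d) : FT.revNeg (g (q + 1)) =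
        localRule (FT.revNeg (g q)) (FT.revNeg (f q)) (FT.revNeg (f (q + 1))) := by
      rw [localRule_revNeg, hg q hq]
    obtain ⟨y, hy, -⟩ := hx.exists_of_localRule (g := fun q => FT.revNeg (g q))
      (revNeg_antitone hg0) hg'
    refine ⟨Or.inr ⟨y, hy⟩, revNeg_injective ?_⟩
    rw [← localRule_revNeg]
    exact hx.eq_localRule (g := fun q => FT.revNeg (g q)) (revNeg_antitone hg0) hg' le_rfl

theorem ColumnPath.rectangle {a : ℕ → ℕ → GP r} {s : ℕ} (htop : ColumnPath d (a 0))
    (hleft : ColumnPath s fun k => a k 0) (htop_anti : ∀ q ≤ d, Antitone (a 0 q))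
    (hleft_anti : Antitone (a s 0))
    (hrule : ∀ k < s, ∀ q < d,
      a (k + 1) (q + 1) = localRule (a (k + 1) q) (a k q) (a k (q + 1))) :
    ColumnPath d (a s) ∧ (ColumnPath s fun k => a k d) ∧
      a s d = localRule (a s 0) (a 0 0) (a 0 d) := by
  have hnext (q : ℕ) (hq : q < d) (hcol : ColumnPath s fun k => a k q) :=
    hcol.of_localRule (g := fun k => a k (q + 1)) (htop_anti _ hq) fun k hk => by
      rw [hrule k hk q hq, localRule_comm]
  have hcol (q : ℕ) (hq : q ≤ d) : ColumnPath s fun k => a k q := by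
    induction q with
    | zero => exact hleft
    | succ q ih => exact (hnext q hq (ih (by omega))).1
  obtain ⟨hbottom, hcorner⟩ := htop.of_localRule hleft_anti fun q hq => by
    rw [(hnext q hq (hcol q hq.le)).2, localRule_comm]
  exact ⟨hbottom, hcol d le_rfl, hcorner⟩

theorem AddsRows.addCell (h : AddsRows d x f) (h0 : f 0 = 0) {q : ℕ} (hq : q + 1 < d) :
    AddCell (f q) (f (q + 1)) (f (q + 1)) (f (q + 2)) := by
  have hx (p : ℕ) (hp : p ≤ q) : x p < x (q + 1) :=
    h.strictMonoOn (Set.mem_Iio.mpr (by omega)) (Set.mem_Iio.mpr hq) (by omega)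
  have hx' (p : ℕ) (hp : p < q) : x p < x q :=
    h.strictMonoOn (Set.mem_Iio.mpr (by omega)) (Set.mem_Iio.mpr (by omega)) hp
  refine ⟨x q, x (q + 1), (hx q le_rfl).le, ?_, h.step q (by omega), h.step (q + 1) hq⟩
  rw [h.apply_of_forall_lt (by omega) hx', h.apply_of_forall_lt (by omega) fun p hp => hx p hp.le,
    h0, Pi.zero_apply, Pi.zero_apply]

theorem ColumnPath.growthCell (h : ColumnPath d f) (h0 : f 0 = 0) {q : ℕ} (hq : q + 1 < d) :
    GrowthCell (f q) (f (q + 1)) (f (q + 1)) (f (q + 2)) := by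
  rcases h with ⟨x, hx⟩ | ⟨x, hx⟩
  · exact Or.inl (hx.addCell h0 hq)
  · have hcell := (hx.addCell (by rw [h0, revNeg_zero]) hq).revNeg
    simp only [revNeg_revNeg] at hcell
    exact Or.inr hcell

end ColumnPath

/-! ### Oscillization of a fluctuating tableau -/

section Oscillization

variable {r d : ℕ} {f : ℕ → GP r} {x : ℕ → Fin r}

theorem AddsRows.injOn (h : AddsRows d x f) {q : ℕ} (hq : q ≤ d) :
    Set.InjOn x (Finset.range q) :=
  h.strictMonoOn.injOn.mono fun _ hp => (Finset.mem_range.mp hp).trans_le hq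

theorem AddsRows.filter_ne (h : AddsRows d x f) :
    (Finset.univ.filter fun i => f d i ≠ f 0 i) = (Finset.range d).image x := by
  ext i
  simp [h.apply le_rfl]

theorem AddsRows.card_filter_ne (h : AddsRows d x f) :
    (Finset.univ.filter fun i => f d i ≠ f 0 i).card = d := by
  rw [h.filter_ne, Finset.card_image_of_injOn (h.injOn le_rfl), Finset.card_range]

theorem AddsRows.card_filter_ne_le (h : AddsRows d x f) {p : ℕ} (hp : p < d) :
    ((Finset.univ.filter fun i => f d i ≠ f 0 i).filter fun i => i ≤ x p).card = p + 1 := by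
  have himage : ((Finset.range d).image x).filter (· ≤ x p) = (Finset.range (p + 1)).image x := by
    have hle (q : ℕ) (hq : q < d) : x q ≤ x p ↔ q ≤ p := h.strictMonoOn.le_iff_le hq hp
    ext i
    simp only [Finset.mem_filter, Finset.mem_image, Finset.mem_range]
    constructor
    · rintro ⟨⟨q, hq, rfl⟩, hqp⟩
      exact ⟨q, Nat.lt_succ_of_le ((hle q hq).mp hqp), rfl⟩
    · rintro ⟨q, hq, rfl⟩
      exact ⟨⟨q, by omega, rfl⟩, (hle q (by omega)).mpr (by omega)⟩
  rw [h.filter_ne, himage, Finset.card_image_of_injOn (h.injOn hp), Finset.card_range]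

theorem AddsRows.oscStep_eq (h : AddsRows d x f) {q : ℕ} (hq : q ≤ d) :
    oscStep (f 0) (f d) q = f q := by
  ext i
  by_cases hi : ∃ p < d, x p = i
  · obtain ⟨p, hp, rfl⟩ := hi
    have hfd : f d (x p) = f 0 (x p) + 1 := by rw [h.apply le_rfl, if_pos ⟨p, hp, rfl⟩]
    have hiff : (∃ p' < q, x p' = x p) ↔ p + 1 ≤ q := by
      refine ⟨fun ⟨p', hp', heq⟩ => ?_, fun hpq => ⟨p, hpq, rfl⟩⟩
      rwa [← h.strictMonoOn.injOn (Set.mem_Iio.mpr (hp'.trans_le hq)) hp heq]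
    rw [h.apply hq, if_congr hiff rfl rfl]
    simp only [oscStep, Finset.mem_filter, Finset.mem_univ, true_and, hfd, h.card_filter_ne_le hp]
    split_ifs <;> simp_all
  · have hfd : f d i = f 0 i := by rw [h.apply le_rfl, if_neg hi, add_zero]
    have hfq : f q i = f 0 i := by
      rw [h.apply hq, if_neg fun ⟨p, hp, heq⟩ => hi ⟨p, hp.trans_le hq, heq⟩, add_zero]
    simp [oscStep, hfd, hfq]

theorem card_filter_rev (p : Fin r → Prop) [DecidablePred p] :
    (Finset.univ.filter fun i : Fin r => p i.rev).card = (Finset.univ.filter p).card :=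
  Finset.card_equiv Fin.revPerm fun i => by simp

theorem oscStep_revNeg (μ lam : GP r) (q : ℕ) :
    oscStep (revNeg μ) (revNeg lam) q = revNeg (oscStep μ lam q) := by
  ext i
  have hle := card_filter_rev fun j => lam j ≠ μ j ∧ i.rev ≤ j
  have hge := card_filter_rev fun j => lam j ≠ μ j ∧ j ≤ i.rev
  simp only [Fin.rev_le_rev] at hle hge
  simp only [oscStep, revNeg, Finset.filter_filter, Finset.mem_filter, Finset.mem_univ, true_and,
    ne_eq, neg_inj, neg_lt_neg_iff, hle, hge]
  rcases lt_trichotomy (μ i.rev) (lam i.rev) with hlt | heq | hgt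
  · simp only [if_pos hlt, if_neg hlt.not_gt]
    split_ifs <;> rfl
  · simp [heq]
  · simp only [if_pos hgt, if_neg hgt.not_gt]
    split_ifs <;> rfl

theorem ColumnPath.card_filter_ne (h : ColumnPath d f) :
    (Finset.univ.filter fun i => f d i ≠ f 0 i).card = d := by
  rcases h with ⟨x, hx⟩ | ⟨x, hx⟩
  · exact hx.card_filter_ne
  · refine (card_filter_rev fun i => f d i ≠ f 0 i).symm.trans ?_
    simpa [FT.revNeg] using hx.card_filter_ne

theorem ColumnPath.oscStep_eq (h : ColumnPath d f) {q : ℕ} (hq : q ≤ d) :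
    oscStep (f 0) (f d) q = f q := by
  rcases h with ⟨x, hx⟩ | ⟨x, hx⟩
  · exact hx.oscStep_eq hq
  · exact revNeg_injective ((oscStep_revNeg _ _ _).symm.trans (hx.oscStep_eq hq))

theorem exists_strictMonoOn_image_range [NeZero r] (A : Finset (Fin r)) :
    ∃ x : ℕ → Fin r, StrictMonoOn x (Set.Iio A.card) ∧ (Finset.range A.card).image x = A := by
  let x : ℕ → Fin r := fun p => if hp : p < A.card then A.orderEmbOfFin rfl ⟨p, hp⟩ else 0
  have hx (p : ℕ) (hp : p < A.card) : x p = A.orderEmbOfFin rfl ⟨p, hp⟩ := dif_pos hp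
  refine ⟨x, fun p hp q hq hpq => ?_, Finset.eq_of_subset_of_card_le ?_ ?_⟩
  · rw [hx p hp, hx q hq]
    exact (A.orderEmbOfFin rfl).strictMono hpq
  · intro i hi
    obtain ⟨p, hp, rfl⟩ := Finset.mem_image.mp hi
    rw [hx p (Finset.mem_range.mp hp)]
    exact A.orderEmbOfFin_mem rfl _
  · rw [Finset.card_image_of_injOn, Finset.card_range]
    intro p hp q hq hpq
    rw [hx p (by simpa using hp), hx q (by simpa using hq)] at hpq
    simpa using (A.orderEmbOfFin rfl).injective hpq

theorem exists_addsRows [NeZero r] (A : Finset (Fin r)) (μ : GP r) :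
    ∃ x f, AddsRows A.card x f ∧ f 0 = μ ∧ f A.card = μ + indV A := by
  obtain ⟨x, hmono, himage⟩ := exists_strictMonoOn_image_range A
  have hx : AddsRows A.card x fun q => μ + ∑ p ∈ Finset.range q, eV (x p) :=
    ⟨hmono, fun q _ => by rw [Finset.sum_range_succ, add_assoc]⟩
  refine ⟨x, _, hx, by simp, funext fun i => ?_⟩
  have hmem : (∃ p < A.card, x p = i) ↔ i ∈ A := by
    conv_rhs => rw [← himage]
    simp only [Finset.mem_image, Finset.mem_range]
  rw [hx.apply le_rfl, if_congr hmem rfl rfl, Finset.sum_range_zero, add_zero]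
  rfl

theorem colStep.exists_columnPath [NeZero r] {c : ℤ} {μ lam : GP r} (h : colStep r c μ lam) :
    ∃ f, ColumnPath c.natAbs f ∧ f 0 = μ ∧ f c.natAbs = lam := by
  obtain ⟨A, hA, hlam⟩ := h
  rw [← hA]
  split_ifs at hlam
  · obtain ⟨x, f, hf, h0, hd⟩ := exists_addsRows A μ
    exact ⟨f, Or.inl ⟨x, hf⟩, h0, hd.trans hlam.symm⟩
  · obtain ⟨x, f, hf, h0, hd⟩ := exists_addsRows A lam
    refine ⟨_, ColumnPath.reverse (Or.inl ⟨x, hf⟩), ?_, by simpa using h0⟩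
    rw [Nat.sub_zero, hd, hlam, sub_add_cancel]

variable {n : ℕ} {c : ℕ → ℤ} {T : ℕ → GP r}

theorem cumC_succ (c : ℕ → ℤ) (j : ℕ) : cumC c (j + 1) = cumC c j + (c j).natAbs :=
  Finset.sum_range_succ _ _

theorem cumC_mono (c : ℕ → ℤ) : Monotone (cumC c) :=
  monotone_nat_of_le_succ fun j => by rw [cumC_succ]; exact Nat.le_add_right _ _

theorem exists_cumC_le_lt (c : ℕ → ℤ) {k : ℕ} (hk : k < cumC c n) :
    ∃ j < n, cumC c j ≤ k ∧ k < cumC c (j + 1) := by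
  induction n with
  | zero => simp [cumC] at hk
  | succ n ih =>
    rcases lt_or_ge k (cumC c n) with hlt | hge
    · obtain ⟨j, hj, hjk⟩ := ih hlt
      exact ⟨j, by omega, hjk⟩
    · exact ⟨n, n.lt_succ_self, hge, hk⟩

/-- `f` is the concatenation of `n` column paths of sizes `|c 0|, …, |c (n - 1)|`, and `T` lists its
break points. -/
structure IsOscillization (n : ℕ) (c : ℕ → ℤ) (f T : ℕ → GP r) : Prop where
  columnPath : ∀ j < n, ColumnPath (c j).natAbs fun q => f (cumC c j + q)
  apply_cumC : ∀ j ≤ n, f (cumC c j) = T j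

theorem IsOscillization.congr {g : ℕ → GP r} (h : IsOscillization n c f T)
    (hfg : ∀ k ≤ cumC c n, f k = g k) : IsOscillization n c g T where
  columnPath j hj := (h.columnPath j hj).congr fun q hq => hfg _ <|
    (cumC_succ c j ▸ Nat.add_le_add_left hq _).trans (cumC_mono c hj)
  apply_cumC j hj := by rw [← hfg _ (cumC_mono c hj), h.apply_cumC j hj]

theorem IsOscillization.cum_eq (h : IsOscillization n c f T) {j : ℕ} (hj : j ≤ n) :
    cum T j = cumC c j := by
  refine Finset.sum_congr rfl fun k hk => ?_
  have hkn : k < n := (Finset.mem_range.mp hk).trans_le hj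
  rw [stepSize, ← h.apply_cumC k hkn.le, ← h.apply_cumC (k + 1) hkn, cumC_succ]
  exact (h.columnPath k hkn).card_filter_ne

theorem stdIdx_eq {j k : ℕ} (hj : j ≤ n) (hjk : cum T j ≤ k)
    (hmax : ∀ i ≤ n, cum T i ≤ k → i ≤ j) : stdIdx n T k = j := by
  refine le_antisymm (Finset.sup_le fun i hi => ?_) (Finset.le_sup (f := id) ?_)
  · simp only [Finset.mem_filter, Finset.mem_range] at hi
    exact hmax i (by omega) hi.2
  · simp only [Finset.mem_filter, Finset.mem_range]
    omega

theorem IsOscillization.stdT_eq (h : IsOscillization n c f T) {k : ℕ} (hk : k ≤ cumC c n) :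
    stdT n T k = f k := by
  rcases hk.eq_or_lt with rfl | hlt
  · rw [stdT, if_pos (stdIdx_eq le_rfl (h.cum_eq le_rfl).le fun i hi _ => hi),
      h.apply_cumC n le_rfl]
  obtain ⟨j, hj, hjk, hkj⟩ := exists_cumC_le_lt c hlt
  have hidx : stdIdx n T k = j := by
    refine stdIdx_eq hj.le (h.cum_eq hj.le ▸ hjk) fun i hi hik => ?_
    rw [h.cum_eq hi] at hik
    exact Nat.lt_succ_iff.mp ((cumC_mono c).reflect_lt (hik.trans_lt hkj))
  rw [cumC_succ] at hkj
  have hosc := (h.columnPath j hj).oscStep_eq (q := k - cumC c j) (by omega)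
  rw [add_zero, ← cumC_succ, h.apply_cumC j hj.le, h.apply_cumC (j + 1) hj,
    Nat.add_sub_cancel' hjk] at hosc
  rw [stdT, hidx, if_neg hj.ne, h.cum_eq hj.le, hosc]

theorem IsOscillization.succ (h : IsOscillization n c f T) {b : ℕ → GP r}
    (hb : ColumnPath (c n).natAbs b) (hb0 : b 0 = T n) (hb1 : b (c n).natAbs = T (n + 1)) :
    IsOscillization (n + 1) c (fun k => if k ≤ cumC c n then f k else b (k - cumC c n)) T := by
  have hold := h.congr (g := fun k => if k ≤ cumC c n then f k else b (k - cumC c n))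
    fun k hk => (if_pos hk).symm
  have hnew (q : ℕ) : (if cumC c n + q ≤ cumC c n then f (cumC c n + q)
      else b (cumC c n + q - cumC c n)) = b q := by
    rcases q.eq_zero_or_pos with rfl | hq
    · rw [add_zero, if_pos le_rfl, h.apply_cumC n le_rfl, hb0]
    · rw [if_neg (by omega), Nat.add_sub_cancel_left]
  constructor
  · intro j hj
    rcases (Nat.lt_succ_iff.mp hj).lt_or_eq with hlt | rfl
    · exact hold.columnPath j hlt
    · exact hb.congr fun q _ => (hnew q).symm
  · intro j hj
    rcases hj.lt_or_eq with hlt | rfl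
    · exact hold.apply_cumC j (Nat.lt_succ_iff.mp hlt)
    · rw [cumC_succ, hnew, hb1]

theorem IsSkewFT.exists_isOscillization [NeZero r] (h : IsSkewFT r n T c) :
    ∃ f, IsOscillization n c f T := by
  induction n with
  | zero =>
    refine ⟨fun _ => T 0, fun j hj => absurd hj j.not_lt_zero, fun j hj => ?_⟩
    rw [Nat.le_zero.mp hj]
  | succ n ih =>
    obtain ⟨f, hf⟩ := ih ⟨fun k hk => h.1 k (by omega), fun j hj => h.2 j (by omega)⟩
    obtain ⟨b, hb, hb0, hb1⟩ := (h.2 n n.lt_succ_self).exists_columnPath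
    exact ⟨_, hf.succ hb hb0 hb1⟩

theorem IsSkewFT.isOscillization_stdT [NeZero r] (h : IsSkewFT r n T c) :
    IsOscillization n c (stdT n T) T := by
  obtain ⟨f, hf⟩ := h.exists_isOscillization
  exact hf.congr fun k hk => (hf.stdT_eq hk).symm

theorem IsOscillization.antitone (h : IsOscillization n c f T) (hT : ∀ j ≤ n, Antitone (T j))
    {k : ℕ} (hk : k ≤ cumC c n) : Antitone (f k) := by
  rcases hk.eq_or_lt with rfl | hlt
  · exact h.apply_cumC n le_rfl ▸ hT n le_rfl
  obtain ⟨j, hj, hjk, hkj⟩ := exists_cumC_le_lt c hlt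
  have hpath := (h.columnPath j hj).antitone (q := k - cumC c j)
  rw [add_zero, ← cumC_succ, h.apply_cumC j hj.le, h.apply_cumC (j + 1) hj,
    Nat.add_sub_cancel' hjk] at hpath
  rw [cumC_succ] at hkj
  exact hpath (hT j hj.le) (hT (j + 1) hj) (by omega)

theorem IsOscillization.boxStep (h : IsOscillization n c f T) {k : ℕ} (hk : k < cumC c n) :
    BoxStep (f k) (f (k + 1)) := by
  obtain ⟨j, hj, hjk, hkj⟩ := exists_cumC_le_lt c hk
  rw [cumC_succ] at hkj
  have hstep := (h.columnPath j hj).boxStep (q := k - cumC c j) (by omega)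
  rwa [← add_assoc, Nat.add_sub_cancel' hjk] at hstep

theorem IsFT.oscillating_stdT [NeZero r] (h : IsFT r n T c) :
    Oscillating (cumC c n) (stdT n T) where
  zero := by
    rw [← h.2, ← h.1.isOscillization_stdT.apply_cumC 0 n.zero_le]
    rfl
  antitone _ := h.1.isOscillization_stdT.antitone h.1.1
  boxStep _ := h.1.isOscillization_stdT.boxStep

end Oscillization

/-! ### Promotion and evacuation of oscillizations -/

section OscillizationPromotion

variable {r n t d s : ℕ} {m : ℤ} {c : ℕ → ℤ} {S T : ℕ → GP r}

theorem Oscillating.promo_eq_of_columnPath (h : Oscillating t S) (hS : ColumnPath d S)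
    (hdt : d ≤ t) {q : ℕ} (hq : q < d) : FT.promo t S q = S q := by
  induction q with
  | zero => exact promo_zero t S
  | succ q ih =>
    rw [promo_succ (hq.trans_le hdt), ih (by omega)]
    exact (hS.growthCell h.zero hq).localRule_eq (h.antitone _ (by omega))

theorem Oscillating.PE_eq_of_columnPath (h : Oscillating t S) (hS : ColumnPath d S)
    (hdt : d ≤ t) {k q : ℕ} (hq : q + k ≤ d) : FT.PE t S k q = S q := by
  induction k generalizing q with
  | zero => rfl
  | succ k ih =>
    have hinit : ColumnPath (d - k) (FT.PE t S k) :=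
      (hS.mono (Nat.sub_le d k)).congr fun p hp => (ih (by omega)).symm
    rw [PE_succ, (h.PE k).promo_eq_of_columnPath hinit (by omega) (by omega), ih (by omega)]

theorem Oscillating.columnPath_block (h : Oscillating t S) {b : ℕ} (hsb : s ≤ b) (hbt : b + d ≤ t)
    (htop : ColumnPath d fun q => S (b + q)) (hleft : ColumnPath s fun k => FT.PE t S k (b - k)) :
    ColumnPath d (fun q => FT.PE t S s (b - s + q)) ∧
      ColumnPath s (fun k => FT.PE t S k (b + d - k)) ∧
      FT.PE t S s (b - s + d) = localRule (FT.PE t S s (b - s)) (S b) (S (b + d)) := by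
  have hblock := ColumnPath.rectangle (a := fun k q => FT.PE t S k (b + q - k)) htop hleft
    (fun q hq => h.antitone _ (by omega)) ((h.PE s).antitone _ (by omega)) fun k hk q hq => by
      rw [show b + (q + 1) - (k + 1) = b + q - (k + 1) + 1 by omega,
        show b + q - k = b + q - (k + 1) + 1 by omega,
        show b + (q + 1) - k = b + q - (k + 1) + 2 by omega]
      exact PE_rule S k (by omega)
  simp only [Nat.sub_add_comm hsb, add_zero, Nat.sub_zero] at hblock
  exact hblock

theorem cumC_add (c : ℕ → ℤ) (j k : ℕ) :
    cumC c (j + k) = cumC c j + cumC (fun i => c (j + i)) k :=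
  Finset.sum_range_add _ _ _

theorem cumC_one_add (c : ℕ → ℤ) (j : ℕ) :
    cumC c (j + 1) = (c 0).natAbs + cumC (fun i => c (1 + i)) j := by
  rw [add_comm, cumC_add, cumC, Finset.sum_range_one]

theorem IsOscillization.columnPath_PE (h : IsOscillization n c S T) (hS : Oscillating t S)
    (ht : cumC c n = t) {j : ℕ} (hj : j < n) :
    ColumnPath (c 0).natAbs fun k => PE t S k (cumC c (j + 1) - k) := by
  induction j with
  | zero =>
    have hfirst : ColumnPath (c 0).natAbs S := by simpa [cumC] using h.columnPath 0 hj
    have hle : (c 0).natAbs ≤ t := by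
      rw [← ht]
      simpa [cumC] using cumC_mono c hj
    refine hfirst.reverse.congr fun k hk => ?_
    rw [cumC_one_add, cumC, Finset.sum_range_zero, add_zero,
      hS.PE_eq_of_columnPath hfirst hle (by omega)]
  | succ j ih =>
    have hle := cumC_mono c hj
    rw [Nat.succ_eq_add_one, cumC_succ, ht] at hle
    rw [cumC_succ c (j + 1)]
    exact (hS.columnPath_block ((Nat.le_add_right _ _).trans_eq (cumC_one_add c j).symm) hle
      (h.columnPath _ hj) (ih (by omega))).2.1

theorem IsOscillization.promo_block (h : IsOscillization n c S T) (hS : Oscillating t S)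
    (ht : cumC c n = t) {j : ℕ} (hj : j + 1 < n) :
    ColumnPath (c (1 + j)).natAbs
        (fun q => PE t S (c 0).natAbs (cumC (fun i => c (1 + i)) j + q)) ∧
      PE t S (c 0).natAbs (cumC (fun i => c (1 + i)) (j + 1)) =
        localRule (PE t S (c 0).natAbs (cumC (fun i => c (1 + i)) j)) (T (j + 1)) (T (j + 2)) := by
  have hle := cumC_mono c hj
  rw [Nat.succ_eq_add_one, cumC_succ, ht] at hle
  have hone := cumC_one_add c j
  obtain ⟨hpath, -, hcorner⟩ := hS.columnPath_block (by omega) hle (h.columnPath _ hj)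
    (h.columnPath_PE hS ht (by omega))
  rw [← cumC_succ, h.apply_cumC _ hj.le, h.apply_cumC _ hj] at hcorner
  rw [show cumC c (j + 1) - (c 0).natAbs = cumC (fun i => c (1 + i)) j by omega] at hpath hcorner
  rw [add_comm 1 j, cumC_succ, add_comm 1 j]
  exact ⟨hpath, hcorner⟩

theorem IsOscillization.promo_apply (h : IsOscillization n c S T) (hS : Oscillating t S)
    (ht : cumC c n = t) {j : ℕ} (hj : j < n) :
    PE t S (c 0).natAbs (cumC (fun i => c (1 + i)) j) = promo n T j := by
  induction j with
  | zero =>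
    rw [promo_zero, ← h.apply_cumC 0 hj.le]
    exact (hS.PE _).zero.trans hS.zero.symm
  | succ j ih => rw [promo_succ hj, (h.promo_block hS ht hj).2, ih (by omega)]

theorem RectOscillating.columnPath_PE_last (h : RectOscillating t m S) (hS : ColumnPath s S)
    (hst : s ≤ t) : ColumnPath s fun q => FT.PE t S s (t - s + q) := by
  refine (hS.reverse.revNeg.add_left (Function.const _ m)).congr fun q hq => ?_
  rw [← h.PE_eq_of_columnPath hS hst (q := s - q) (k := q) (by omega)]
  have hdual := h.PE_dual q (u := s - q) (by omega)
  rw [← hdual, Nat.add_sub_cancel' hq, show t - (s - q) = t - s + q by omega]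

theorem IsOscillization.promo (h : IsOscillization n c S T) (hS : RectOscillating t m S)
    (ht : cumC c n = t) (hc : c n = c 0) :
    IsOscillization n (fun i => c (1 + i)) (PE t S (c 0).natAbs) (promo n T) where
  columnPath j hj := by
    rcases (Nat.succ_le_of_lt hj).lt_or_eq with hlt | rfl
    · exact (h.promo_block hS.toOscillating ht hlt).1
    · have hfirst : ColumnPath (c 0).natAbs S := by simpa [cumC] using h.columnPath 0 j.succ_pos
      have hcum := cumC_one_add c j
      rw [← Nat.succ_eq_add_one, ht] at hcum
      rw [show cumC (fun i => c (1 + i)) j = t - (c 0).natAbs by omega, add_comm 1 j,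
        ← Nat.succ_eq_add_one, hc]
      exact hS.columnPath_PE_last hfirst (by omega)
  apply_cumC j hj := by
    rcases hj.lt_or_eq with hlt | rfl
    · exact h.promo_apply hS.toOscillating ht hlt
    · have hcum := cumC_one_add c j
      rw [cumC_succ, ht, hc] at hcum
      rw [promo_of_le le_rfl, show cumC (fun i => c (1 + i)) j = t by omega, PE_last,
        ← h.apply_cumC j le_rfl, ht]

theorem cumC_shift_of_periodic (hc : Function.Periodic c n) (j : ℕ) :
    cumC (fun i => c (j + i)) n = cumC c n := by
  have hcn : (fun i => c (n + i)) = c := funext fun i => by rw [add_comm, hc]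
  have hadd := cumC_add c j n
  rw [add_comm j n, cumC_add, hcn, add_comm] at hadd
  exact (Nat.add_left_cancel hadd).symm

theorem IsOscillization.PE (h : IsOscillization n c S T) (hS : RectOscillating t m S)
    (ht : cumC c n = t) (hc : Function.Periodic c n) (j : ℕ) :
    IsOscillization n (fun i => c (j + i)) (FT.PE t S (cumC c j)) (FT.PE n T j) := by
  induction j with
  | zero => simp only [zero_add]; exact h
  | succ j ih =>
    have hnext := ih.promo (hS.PE _) ((cumC_shift_of_periodic hc j).trans ht) (hc j)
    rw [PE_PE, ← PE_succ, add_zero, add_comm, ← cumC_succ] at hnext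
    simpa only [add_assoc] using hnext

theorem evacAux_of_lt {k : ℕ} (hmk : n < k) (T : ℕ → GP r) : evacAux n T k = T k := by
  induction n generalizing T with
  | zero => rfl
  | succ n ih => rw [evacAux, ih (by omega), BKseg_one_of_lt hmk]

theorem evac_eq_PE (T : ℕ → GP r) {k : ℕ} (hk : k ≤ n) : evac n T k = FT.PE n T (n - k) k := by
  rcases n with - | n
  · rw [Nat.zero_sub]; rfl
  induction n generalizing T with
  | zero => interval_cases k <;> rfl
  | succ n ih =>
    change evac (n + 1) (FT.promo (n + 2) T) k = _
    rcases hk.lt_or_eq with hlt | rfl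
    · rw [ih _ (by omega), PE_congr_length (t' := n + 2) (by omega) (by omega)]
      change FT.PE (n + 2) (FT.PE (n + 2) T 1) _ k = _
      rw [PE_PE, ← Nat.sub_add_comm (by omega)]
    · rw [Nat.sub_self]
      exact (evacAux_of_lt (by omega) _).trans (promo_of_le le_rfl T)

theorem cumC_reflect (c : ℕ → ℤ) {j : ℕ} (hj : j ≤ n) :
    cumC c (n - j) + cumC (fun i => c (n - 1 - i)) j = cumC c n := by
  have hreflect : cumC (fun i => c (n - 1 - i)) j = cumC (fun i => c (n - j + i)) j := by
    refine (Finset.sum_range_reflect _ j).symm.trans (Finset.sum_congr rfl fun i hi => ?_)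
    rw [Finset.mem_range] at hi
    exact congrArg (fun k => (c k).natAbs) (by omega)
  rw [hreflect, ← cumC_add, Nat.sub_add_cancel hj]

theorem IsOscillization.evac (h : IsOscillization n c S T) (hS : RectOscillating t m S)
    (ht : cumC c n = t) (hc : Function.Periodic c n) :
    IsOscillization n (fun j => c (n - 1 - j)) (dualPath t m S) (FT.evac n T) where
  columnPath j hj := by
    have hreflect := cumC_reflect c hj.le
    have hsucc := cumC_succ c (n - 1 - j)
    rw [show n - 1 - j + 1 = n - j by omega] at hsucc
    refine ((h.columnPath (n - 1 - j) (by omega)).reverse.revNeg.add_left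
      (Function.const _ m)).congr fun q hq => ?_
    rw [dualPath]
    congr 3
    omega
  apply_cumC j hj := by
    have hreflect := cumC_reflect c hj
    have hadd := cumC_add c (n - j) j
    rw [Nat.sub_add_cancel hj] at hadd
    have hPE := (h.PE hS ht hc (n - j)).apply_cumC j hj
    rw [hS.dualPath_eq_PE (by omega), evac_eq_PE T hj, ← hPE]
    congr 1 <;> omega

end OscillizationPromotion

/-! ### Promotion functions of a rectangular fluctuating tableau -/

section PromotionFunctions

variable {r n t i u v : ℕ} {m : ℤ} {c : ℕ → ℤ} {S T : ℕ → GP r}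

theorem IsOscillization.promRel_iff (h : IsOscillization n c S T) (hS : RectOscillating t m S)
    (ht : cumC c n = t) (hi : i ≤ r) (hu₁ : 1 ≤ u) (hut : u ≤ t) (hv₁ : 1 ≤ v) (hvt : v ≤ t) :
    promRel r n t T i u v ↔ cyclicProm t S i u v := by
  have hstd (k : ℕ) (hk : k ≤ t) : S k = stdT n T k := (h.stdT_eq (ht ▸ hk)).symm
  rw [(hS.congr hstd).promRel_iff hi hu₁ hut hv₁ hvt, cyclicProm_congr hstd]

theorem bijective_natCast_succ [NeZero t] :
    Function.Bijective fun u : Fin t => ((u + 1 : ℕ) : ZMod t) := by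
  refine (Fintype.bijective_iff_injective_and_card _).mpr ⟨fun u v huv => ?_, by simp⟩
  have hsucc := natCast_injOn_Ico 1 (by simp; omega) (by simp; omega) huv
  exact Fin.ext (Nat.succ_injective hsucc)

theorem IsOscillization.exists_perm_promRel [NeZero t] (h : IsOscillization n c S T)
    (hS : RectOscillating t m S) (ht : cumC c n = t) (hi : i ≤ r) :
    ∃ π : Equiv.Perm (Fin t), ∀ u v : Fin t,
      promRel r n t T i ((u : ℕ) + 1) ((v : ℕ) + 1) ↔ π u = v := by
  obtain ⟨π, hπ⟩ := hS.exists_perm_cyclicProm hi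
  let e : Fin t ≃ ZMod t := Equiv.ofBijective _ bijective_natCast_succ
  refine ⟨(e.trans π).trans e.symm, fun u v => ?_⟩
  rw [h.promRel_iff hS ht hi (by omega) (by omega) (by omega) (by omega), hπ]
  exact (Equiv.symm_apply_eq e).symm

theorem IsOscillization.promRel_dual (h : IsOscillization n c S T) (hS : RectOscillating t m S)
    (ht : cumC c n = t) (hi : i ≤ r) (hu₁ : 1 ≤ u) (hut : u ≤ t) (hv₁ : 1 ≤ v) (hvt : v ≤ t) :
    promRel r n t T i u v ↔ promRel r n t T (r - i) v u := by
  rw [h.promRel_iff hS ht hi hu₁ hut hv₁ hvt, hS.cyclicProm_dual hi,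
    h.promRel_iff hS ht (Nat.sub_le r i) hv₁ hvt hu₁ hut]

theorem IsOscillization.promRel_promo [NeZero t] (h : IsOscillization n c S T)
    (hS : RectOscillating t m S) (ht : cumC c n = t) (hc : Function.Periodic c n) (hi : i ≤ r)
    (hu₁ : 1 ≤ u) (hut : u ≤ t) (hv₁ : 1 ≤ v) (hvt : v ≤ t) :
    promRel r n t (FT.promo n T) i u v ↔
      promRel r n t T i ((u - 1 + (c 0).natAbs) % t + 1) ((v - 1 + (c 0).natAbs) % t + 1) := by
  have hpromo := h.promo hS ht (by simpa using hc 0)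
  have hmod (k : ℕ) : k % t + 1 ≤ t := Nat.mod_lt k (NeZero.pos t)
  have hcast (k : ℕ) (hk : 1 ≤ k) :
      (((k - 1 + (c 0).natAbs) % t + 1 : ℕ) : ZMod t) = k + ((c 0).natAbs : ℕ) := by
    rw [Nat.cast_add, ZMod.natCast_mod, ← Nat.cast_add, ← Nat.cast_add]
    congr 1
    omega
  rw [hpromo.promRel_iff (hS.PE _) ((cumC_shift_of_periodic hc 1).trans ht) hi hu₁ hut hv₁ hvt,
    hS.cyclicProm_PE, h.promRel_iff hS ht hi (Nat.le_add_left _ _) (hmod _)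
      (Nat.le_add_left _ _) (hmod _), hcast u hu₁, hcast v hv₁]

theorem IsOscillization.promRel_evac [NeZero t] (h : IsOscillization n c S T)
    (hS : RectOscillating t m S) (ht : cumC c n = t) (hc : Function.Periodic c n) (hi : i ≤ r)
    (hu₁ : 1 ≤ u) (hut : u ≤ t) (hv₁ : 1 ≤ v) (hvt : v ≤ t) :
    promRel r n t (FT.evac n T) i u v ↔ promRel r n t T (r - i) (t + 1 - u) (t + 1 - v) := by
  have hcum : cumC (fun j => c (n - 1 - j)) n = t := by
    rw [← ht, ← cumC_reflect c le_rfl, Nat.sub_self]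
    exact (zero_add _).symm
  have hcast (k : ℕ) (hk : k ≤ t) : ((t + 1 - k : ℕ) : ZMod t) = 1 - k := by
    rw [Nat.cast_sub (by omega), Nat.cast_add, ZMod.natCast_self, zero_add, Nat.cast_one]
  rw [(h.evac hS ht hc).promRel_iff hS.dualPath hcum hi hu₁ hut hv₁ hvt,
    hS.cyclicProm_dualPath hi, h.promRel_iff hS ht (Nat.sub_le r i) (by omega) (by omega)
      (by omega) (by omega), hcast u hut, hcast v hvt]

theorem colStep.natAbs_le {k : ℤ} {μ lam : GP r} (h : colStep r k μ lam) : k.natAbs ≤ r := by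
  obtain ⟨A, hA, -⟩ := h
  exact hA ▸ card_finset_fin_le A

theorem IsSkewFT.pos_of_cumC_pos (h : IsSkewFT r n T c) (hc : 0 < cumC c n) : 0 < r := by
  obtain ⟨j, hj, hpos⟩ := Finset.exists_ne_zero_of_sum_ne_zero hc.ne'
  exact (Nat.pos_of_ne_zero hpos).trans_le (h.2 j (Finset.mem_range.mp hj)).natAbs_le

theorem IsFT.rectOscillating_stdT [NeZero r] (h : IsFT r n T c) (hT : ∀ i, T n i = m) :
    RectOscillating (cumC c n) m (stdT n T) :=
  ⟨h.oscillating_stdT, (h.1.isOscillization_stdT.apply_cumC n le_rfl).trans (funext hT)⟩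

theorem IsFT.periodic (h : IsFT r n T c) : IsFT r n T fun j => c (j % n) :=
  ⟨⟨h.1.1, fun j hj => by simpa only [Nat.mod_eq_of_lt hj] using h.1.2 j hj⟩, h.2⟩

theorem cumC_mod (c : ℕ → ℤ) (n : ℕ) : cumC (fun j => c (j % n)) n = cumC c n :=
  Finset.sum_congr rfl fun j hj => by simp only [Nat.mod_eq_of_lt (Finset.mem_range.mp hj)]

theorem periodic_mod (c : ℕ → ℤ) (n : ℕ) : Function.Periodic (fun j => c (j % n)) n :=
  fun j => congrArg c (Nat.add_mod_right j n)

end PromotionFunctions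

/-- **Theorem (promotion permutations of rectangular fluctuating tableaux).**
Let `T` be an `r`-row rectangular fluctuating tableau of type `(c_1,…,c_n)` with
`t = Σ_j |c_j| ≥ 1`.  Then for all `0 ≤ i ≤ r`:
(i) `prom_i(T)` is everywhere defined and is a permutation of `{1,…,t}` (its graph is
    the graph of a permutation);
(ii) `prom_i(T) = prom_{r-i}(T)⁻¹`;
(iii) `prom_i(P(T)) = σ^{-|c_1|} ∘ prom_i(T) ∘ σ^{|c_1|}` where `σ` is the long cycle
      `σ(j) = j+1 (mod t)` on `{1,…,t}`;
(iv) `prom_i(E(T)) = w₀ ∘ prom_{r-i}(T) ∘ w₀` where `w₀(j) = t+1-j`. -/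
theorem promotion_permutation_properties
    (r n t : ℕ) (T : ℕ → GP r) (c : ℕ → ℤ)
    (hT : IsFT r n T c) (hrect : Rect r n T)
    (ht : t = ∑ j ∈ Finset.range n, (c j).natAbs) (ht1 : 1 ≤ t) :
    ∀ i ≤ r,
      (∃ π : Equiv.Perm (Fin t), ∀ u v : Fin t,
          promRel r n t T i ((u : ℕ) + 1) ((v : ℕ) + 1) ↔ π u = v) ∧
      (∀ u v, 1 ≤ u → u ≤ t → 1 ≤ v → v ≤ t →
          (promRel r n t T i u v ↔ promRel r n t T (r - i) v u)) ∧
      (∀ u v, 1 ≤ u → u ≤ t → 1 ≤ v → v ≤ t →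
          (promRel r n t (promo n T) i u v ↔
            promRel r n t T i ((u - 1 + (c 0).natAbs) % t + 1)
              ((v - 1 + (c 0).natAbs) % t + 1))) ∧
      (∀ u v, 1 ≤ u → u ≤ t → 1 ≤ v → v ≤ t →
          (promRel r n t (evac n T) i u v ↔
            promRel r n t T (r - i) (t + 1 - u) (t + 1 - v))) := by
  have htc : cumC (fun j => c (j % n)) n = t := (cumC_mod c n).trans ht.symm
  have hperiodic := periodic_mod c n
  obtain ⟨m, hm⟩ := hrect
  have : NeZero t := ⟨by omega⟩
  have : NeZero r := ⟨(hT.1.pos_of_cumC_pos (ht1.trans_eq ht)).ne'⟩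
  have hosc := hT.periodic.1.isOscillization_stdT
  have hS := htc ▸ hT.periodic.rectOscillating_stdT hm
  intro i hi
  refine ⟨hosc.exists_perm_promRel hS htc hi, fun _ _ => hosc.promRel_dual hS htc hi,
    fun _ _ hu₁ hut hv₁ hvt => ?_, fun _ _ => hosc.promRel_evac hS htc hperiodic hi⟩
  simpa only [Nat.zero_mod] using hosc.promRel_promo hS htc hperiodic hi hu₁ hut hv₁ hvt

end FT
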